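/- arXiv:0810.0435 — 7 statements merged into one kernel-verified Lean document; each statement's English description precedes it below -/
import Mathlib

section
/- Let K be a field, R a K-module, and M_{pq} : R^{⊗p} ⊗ R^{⊗q} → R (p,q ≥ 0) a family of K-multilinear operations with M_{00} = 0, M_{10} = M_{01} = id_R, and M_{p0} = 0 = M_{0q} for p,q ≥ 2. Define a bilinear product * on the tensor module T(R) = ⊕_{n≥0} R^{⊗n} by: the element 1 ∈ R^{⊗0} is a two-sided unit, and for p,q ≥ 1, (x₁⊗…⊗x_p) * (y₁⊗…⊗y_q) = Σ_{k=1}^{p+q} Σ M_{i₁j₁}(x¹;y¹) ⊗ M_{i₂j₂}(x²;y²) ⊗ … ⊗ M_{i_kj_k}(x^k;y^k), where the inner sum runs over all pairs of sequences (i₁,…,i_k), (j₁,…,j_k) of nonnegative integers with i₁+…+i_k = p, j₁+…+j_k = q and i_t + j_t ≥ 1 for all t, and x^t denotes the consecutive block x_{i₁+…+i_{t−1}+1} ⊗ … ⊗ x_{i₁+…+i_t} (similarly y^t). Then * is associative if and only if for all i,j,k ≥ 1 the multibrace relation (R_{ijk}) holds: Σ_{l=1}^{i+j} Σ M_{lk}(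 M_{i₁j₁}(x¹;y¹) ⊗ … ⊗ M_{i_lj_l}(x^l;y^l) ; z₁⊗…⊗z_k ) = Σ_{m=1}^{j+k} Σ M_{im}( x₁⊗…⊗x_i ; M_{j₁k₁}(y¹;z¹) ⊗ … ⊗ M_{j_mk_m}(y^m;z^m) ) for all x₁,…,x_i, y₁,…,y_j, z₁,…,z_k ∈ R, where the left inner sum is over all sequences (i₁,…,i_l), (j₁,…,j_l) of nonnegative integers with i₁+…+i_l = i, j₁+…+j_l = j and i_t + j_t ≥ 1, and the right inner sum is over (j₁,…,j_m), (k₁,…,k_m) with j₁+…+j_m = j, k₁+…+k_m = k and j_t + k_t ≥ 1, blocks being consecutive as above. -/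
open Finset

/-- The set of pairs of sequences `(i₁,…,i_k)`, `(j₁,…,j_k)` of nonnegative integers with
`i₁+⋯+i_k = p`, `j₁+⋯+j_k = q` and `i_t + j_t ≥ 1` for all `t`, encoded as functions
`Fin k → ℕ × ℕ`. -/
def Comps (k p q : ℕ) : Finset (Fin k → ℕ × ℕ) :=
  (Fintype.piFinset fun _ : Fin k => Finset.range (p + 1) ×ˢ Finset.range (q + 1)).filter
    fun c => (∑ t, (c t).1) = p ∧ (∑ t, (c t).2) = q ∧ ∀ t, 1 ≤ (c t).1 + (c t).2

/-- Offset of the `t`-th consecutive block in the first family of variables. -/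
def off1 {k : ℕ} (c : Fin k → ℕ × ℕ) (t : Fin k) : ℕ :=
  ∑ u ∈ Finset.univ.filter (fun u => u < t), (c u).1

/-- Offset of the `t`-th consecutive block in the second family of variables. -/
def off2 {k : ℕ} (c : Fin k → ℕ × ℕ) (t : Fin k) : ℕ :=
  ∑ u ∈ Finset.univ.filter (fun u => u < t), (c u).2

section

variable (K : Type*) [Field K] (V : Type*) [AddCommGroup V] [Module K V]

/-- The tensor module `T(V) = ⊕_{n≥0} V^{⊗n}`. -/
abbrev TensorModule : Type _ := DirectSum ℕ fun n => TensorPower K n V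

/-- The pure tensor `x₁ ⊗ ⋯ ⊗ x_p` in `V^{⊗p} ⊆ T(V)` (from the first `p` entries of a
sequence `x : ℕ → V`). -/
noncomputable def el (p : ℕ) (x : ℕ → V) : TensorModule K V :=
  DirectSum.of (fun n => TensorPower K n V) p (PiTensorProduct.tprod K fun i : Fin p => x i.1)

/-- The unit `1 ∈ V^{⊗0} ⊆ T(V)`. -/
noncomputable def unitEl : TensorModule K V :=
  DirectSum.of (fun n => TensorPower K n V) 0 (PiTensorProduct.tprod K fun i : Fin 0 => i.elim0)

/-- `M_{i_t j_t}(x^t; y^t)`: the multilinear operation `M` applied to the `t`-th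
consecutive blocks of the sequences `x` and `y`, as prescribed by the composition `c`. -/
noncomputable def blockValM
    (M : ∀ p q : ℕ, MultilinearMap K (fun _ : Fin p => V)
      (MultilinearMap K (fun _ : Fin q => V) V))
    {k : ℕ} (c : Fin k → ℕ × ℕ) (x y : ℕ → V) (t : Fin k) : V :=
  M (c t).1 (c t).2 (fun s => x (off1 c t + s.1)) (fun s => y (off2 c t + s.1))

/-- The multibrace relation `(R_{ijk})`. -/
def RrelM
    (M : ∀ p q : ℕ, MultilinearMap K (fun _ : Fin p => V)
      (MultilinearMap K (fun _ : Fin q => V) V))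
    (i j k : ℕ) (x y z : ℕ → V) : Prop :=
  ∑ l ∈ Finset.Icc 1 (i + j), ∑ c ∈ Comps l i j,
      M l k (fun t : Fin l => blockValM K V M c x y t) (fun s : Fin k => z s.1)
    = ∑ m ∈ Finset.Icc 1 (j + k), ∑ c ∈ Comps m j k,
        M i m (fun s : Fin i => x s.1) (fun t : Fin m => blockValM K V M c y z t)

/-!
Deconcatenation makes `T(V)` the cofree coalgebra on `V`, so a coalgebra morphism into it is
determined by its corestriction, its composite with the projection onto `V`. Cutting a pair of
words into consecutive blocks is compatible with deconcatenation, hence the product `*` is the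
coalgebra morphism `T(V) ⊗ T(V) → T(V)` with corestriction `M`, and `(xs * ys) * zs` and
`xs * (ys * zs)` are two coalgebra morphisms on `T(V)^{⊗3}`. Their corestrictions are the two sides
of `(R_{ijk})`, so they agree if and only if the multibrace relations hold. The boundary conditions
on `M` say that `*` with corestriction `M` has the empty word as its unit.
-/

section Deconcatenation

variable {α β A : Type*} [AddCommMonoid A]

lemma take_drop_injective (w : List α) :
    Function.Injective fun i : Fin (w.length + 1) => (w.take i, w.drop i) := fun i j h => by
  have := congrArg (fun p => p.1.length) h
  simp only [List.length_take] at this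
  omega

/-- The terms `(u, v)` of the deconcatenation coproduct `w ↦ ∑ u ⊗ v`, over all `w = u ++ v`. -/
def splits (w : List α) : Finset (List α × List α) :=
  Finset.univ.map ⟨_, take_drop_injective w⟩

@[simp] lemma mem_splits {w : List α} {p : List α × List α} : p ∈ splits w ↔ p.1 ++ p.2 = w := by
  simp only [splits, Finset.mem_map, Finset.mem_univ, true_and, Function.Embedding.coeFn_mk]
  constructor
  · rintro ⟨i, rfl⟩
    exact List.take_append_drop _ _
  · rintro rfl
    exact ⟨⟨p.1.length, by simp⟩, by simp⟩

@[simp] lemma splits_nil : splits ([] : List α) = {([], [])} := by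
  ext
  simp [Prod.ext_iff]

lemma sum_splits (w : List α) (F : List α × List α → A) :
    ∑ p ∈ splits w, F p = ∑ i ∈ Finset.range (w.length + 1), F (w.take i, w.drop i) := by
  rw [splits, Finset.sum_map]
  exact Fin.sum_univ_eq_sum_range (fun i => F (w.take i, w.drop i)) _

lemma sum_splits_map (f : α → β) (w : List α) (F : List β × List β → A) :
    ∑ p ∈ splits (w.map f), F p = ∑ p ∈ splits w, F (p.1.map f, p.2.map f) := by
  simp [sum_splits]

/-- The terms of the coproduct on `H₁ ⊗ H₂`, for coproducts on `H₁` and `H₂` with terms `Δ₁`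
and `Δ₂`. -/
def prodSplits {H₁ H₂ : Type*} (Δ₁ : H₁ → Finset (H₁ × H₁)) (Δ₂ : H₂ → Finset (H₂ × H₂))
    (h : H₁ × H₂) : Finset ((H₁ × H₂) × (H₁ × H₂)) :=
  (Δ₁ h.1 ×ˢ Δ₂ h.2).map (Equiv.prodProdProdComm H₁ H₁ H₂ H₂).toEmbedding

section ProdSplits

variable {H₁ H₂ : Type*} {Δ₁ : H₁ → Finset (H₁ × H₁)} {Δ₂ : H₂ → Finset (H₂ × H₂)}

@[simp] lemma mem_prodSplits {h : H₁ × H₂} {p : (H₁ × H₂) × (H₁ × H₂)} :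
    p ∈ prodSplits Δ₁ Δ₂ h ↔ (p.1.1, p.2.1) ∈ Δ₁ h.1 ∧ (p.1.2, p.2.2) ∈ Δ₂ h.2 := by
  simp only [prodSplits, Finset.mem_map_equiv, Finset.mem_product]
  rfl

lemma sum_prodSplits (h : H₁ × H₂) (F : (H₁ × H₂) × (H₁ × H₂) → A) :
    ∑ p ∈ prodSplits Δ₁ Δ₂ h, F p
      = ∑ p ∈ Δ₁ h.1, ∑ q ∈ Δ₂ h.2, F ((p.1, q.1), (p.2, q.2)) := by
  simp [prodSplits, Finset.sum_product]

end ProdSplits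

end Deconcatenation

section InitialWord

variable {α : Type*}

/-- The word formed by the first `p` entries of a sequence, the form in which the relations
`(R_{ijk})` supply their arguments. -/
def initialWord (p : ℕ) (x : ℕ → α) : List α :=
  List.ofFn fun s : Fin p => x s

@[simp] lemma length_initialWord (p : ℕ) (x : ℕ → α) : (initialWord p x).length = p :=
  List.length_ofFn

lemma exists_initialWord_eq [Nonempty α] (w : List α) : ∃ x, initialWord w.length x = w :=
  ⟨fun n => w.getD n (Classical.arbitrary α),
    List.ext_getElem (by simp) fun n _ _ => by simp [initialWord]⟩

lemma take_drop_initialWord {p a n : ℕ} (h : a + n ≤ p) (x : ℕ → α) :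
    ((initialWord p x).drop a).take n = List.ofFn fun s : Fin n => x (a + s) :=
  List.ext_getElem (by simp; omega) fun _ _ _ => by simp [initialWord]

end InitialWord

section Compositions

lemma mem_Comps {k p q : ℕ} {c : Fin k → ℕ × ℕ} :
    c ∈ Comps k p q ↔
      (∑ t, (c t).1) = p ∧ (∑ t, (c t).2) = q ∧ ∀ t, 1 ≤ (c t).1 + (c t).2 := by
  simp only [Comps, Finset.mem_filter, Fintype.mem_piFinset, Finset.mem_product,
    Finset.mem_range, and_iff_right_iff_imp]
  rintro ⟨rfl, rfl, -⟩ t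
  exact ⟨Nat.lt_succ_of_le (Finset.single_le_sum (f := fun t => (c t).1) (by simp) (by simp)),
    Nat.lt_succ_of_le (Finset.single_le_sum (f := fun t => (c t).2) (by simp) (by simp))⟩

lemma le_add_of_mem_Comps {k p q : ℕ} {c : Fin k → ℕ × ℕ} (hc : c ∈ Comps k p q) :
    k ≤ p + q := by
  obtain ⟨rfl, rfl, hpos⟩ := mem_Comps.1 hc
  simpa [Finset.sum_add_distrib] using Finset.sum_le_sum fun t (_ : t ∈ Finset.univ) => hpos t

lemma off1_zero {k : ℕ} (c : Fin (k + 1) → ℕ × ℕ) : off1 c 0 = 0 := by simp [off1]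

lemma off2_zero {k : ℕ} (c : Fin (k + 1) → ℕ × ℕ) : off2 c 0 = 0 := by simp [off2]

lemma off1_cons_succ {k : ℕ} (a : ℕ × ℕ) (c : Fin k → ℕ × ℕ) (t : Fin k) :
    off1 (Fin.cons a c : Fin (k + 1) → ℕ × ℕ) t.succ = a.1 + off1 c t := by
  simp [off1, Finset.sum_filter, Fin.sum_univ_succ]

lemma off2_cons_succ {k : ℕ} (a : ℕ × ℕ) (c : Fin k → ℕ × ℕ) (t : Fin k) :
    off2 (Fin.cons a c : Fin (k + 1) → ℕ × ℕ) t.succ = a.2 + off2 c t := by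
  simp [off2, Finset.sum_filter, Fin.sum_univ_succ]

lemma off1_add_le {k : ℕ} (c : Fin k → ℕ × ℕ) (t : Fin k) :
    off1 c t + (c t).1 ≤ ∑ u, (c u).1 := by
  rw [off1, add_comm, ← Finset.sum_insert (f := fun u => (c u).1) (by simp)]
  exact Finset.sum_le_sum_of_subset (Finset.subset_univ _)

lemma off2_add_le {k : ℕ} (c : Fin k → ℕ × ℕ) (t : Fin k) :
    off2 c t + (c t).2 ≤ ∑ u, (c u).2 :=
  off1_add_le (Prod.swap ∘ c) t

end Compositions

section Cuts

variable {α : Type*}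

/-- The pair of words cut into the given pairs of consecutive blocks. -/
def joinBlocks (l : List (List α × List α)) : List α × List α :=
  ((l.map Prod.fst).flatten, (l.map Prod.snd).flatten)

@[simp] lemma joinBlocks_nil : joinBlocks ([] : List (List α × List α)) = ([], []) := rfl

@[simp] lemma joinBlocks_cons (b : List α × List α) (l : List (List α × List α)) :
    joinBlocks (b :: l) = (b.1 ++ (joinBlocks l).1, b.2 ++ (joinBlocks l).2) := rfl

@[simp] lemma joinBlocks_append (l l' : List (List α × List α)) :
    joinBlocks (l ++ l')
      = ((joinBlocks l).1 ++ (joinBlocks l').1, (joinBlocks l).2 ++ (joinBlocks l').2) := by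
  simp [joinBlocks]

/-- The consecutive blocks `(x¹, y¹), …, (x^k, y^k)` of a pair of words whose sizes are prescribed
by `c`. -/
def blocks {k : ℕ} (c : Fin k → ℕ × ℕ) (h : List α × List α) : List (List α × List α) :=
  List.ofFn fun t => ((h.1.drop (off1 c t)).take (c t).1, (h.2.drop (off2 c t)).take (c t).2)

lemma blocks_cons {k : ℕ} (a : ℕ × ℕ) (c : Fin k → ℕ × ℕ) (h : List α × List α) :
    blocks (Fin.cons a c : Fin (k + 1) → ℕ × ℕ) h
      = (h.1.take a.1, h.2.take a.2) :: blocks c (h.1.drop a.1, h.2.drop a.2) := by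
  simp [blocks, List.ofFn_succ, off1_zero, off2_zero, off1_cons_succ, off2_cons_succ]

lemma joinBlocks_blocks {k : ℕ} {c : Fin k → ℕ × ℕ} {h : List α × List α}
    (hfst : ∑ t, (c t).1 = h.1.length) (hsnd : ∑ t, (c t).2 = h.2.length) :
    joinBlocks (blocks c h) = h := by
  induction c using Fin.consInduction generalizing h with
  | elim0 =>
    simp only [Finset.univ_eq_empty, Finset.sum_empty] at hfst hsnd
    exact Prod.ext (List.eq_nil_of_length_eq_zero hfst.symm).symm
      (List.eq_nil_of_length_eq_zero hsnd.symm).symm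
  | cons a c ih =>
    simp only [Fin.sum_univ_succ, Fin.cons_zero, Fin.cons_succ] at hfst hsnd
    rw [blocks_cons, joinBlocks_cons, ih] <;> simp <;> omega

/-- The pair of lengths of a pair of words. -/
@[simps] def blockSize (b : List α × List α) : ℕ × ℕ := (b.1.length, b.2.length)

lemma map_blockSize_blocks {k : ℕ} {c : Fin k → ℕ × ℕ} {h : List α × List α}
    (hfst : ∑ t, (c t).1 = h.1.length) (hsnd : ∑ t, (c t).2 = h.2.length) :
    (blocks c h).map blockSize = List.ofFn c := by
  simp only [blocks, List.map_ofFn, List.ofFn_inj]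
  funext t
  have := off1_add_le c t
  have := off2_add_le c t
  ext <;> simp [blockSize] <;> omega

lemma blocks_blockSize (l : List (List α × List α)) :
    blocks (fun t : Fin l.length => blockSize l[t]) (joinBlocks l) = l := by
  induction l with
  | nil => rfl
  | cons b l ih =>
    have : (fun t : Fin (b :: l).length => blockSize (b :: l)[t])
        = Fin.cons (blockSize b) fun t : Fin l.length => blockSize l[t] :=
      funext <| Fin.cases rfl fun _ => rfl
    rw [this, blocks_cons]
    simpa using ih

lemma sum_fst_blockSize (l : List (List α × List α)) :
    ∑ t : Fin l.length, (blockSize l[t]).1 = (joinBlocks l).1.length := by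
  rw [joinBlocks, List.length_flatten, List.map_map]
  exact Fin.sum_univ_fun_getElem l fun b => b.1.length

lemma sum_snd_blockSize (l : List (List α × List α)) :
    ∑ t : Fin l.length, (blockSize l[t]).2 = (joinBlocks l).2.length := by
  rw [joinBlocks, List.length_flatten, List.map_map]
  exact Fin.sum_univ_fun_getElem l fun b => b.2.length

open scoped Classical in
/-- The ways to cut a pair of words into consecutive pairs of blocks, not both empty. -/
noncomputable def cuts (h : List α × List α) : Finset (List (List α × List α)) :=
  ((Finset.range (h.1.length + h.2.length + 1)).sigma fun k =>
    Comps k h.1.length h.2.length).image fun c => blocks c.2 h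

lemma mem_cuts {h : List α × List α} {l : List (List α × List α)} :
    l ∈ cuts h ↔ joinBlocks l = h ∧ ([], []) ∉ l := by
  simp only [cuts, Finset.mem_image, Finset.mem_sigma, Finset.mem_range, Sigma.exists,
    Nat.lt_succ_iff]
  constructor
  · rintro ⟨k, c, ⟨-, hc⟩, rfl⟩
    obtain ⟨hfst, hsnd, hpos⟩ := mem_Comps.1 hc
    refine ⟨joinBlocks_blocks hfst hsnd, fun hmem => ?_⟩
    have hzero : (0, 0) ∈ (blocks c h).map blockSize := List.mem_map_of_mem hmem
    rw [map_blockSize_blocks hfst hsnd, List.mem_ofFn] at hzero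
    obtain ⟨t, ht⟩ := hzero
    simpa [ht] using hpos t
  · rintro ⟨rfl, hl⟩
    have hc : (fun t : Fin l.length => blockSize l[t])
        ∈ Comps l.length (joinBlocks l).1.length (joinBlocks l).2.length := by
      refine mem_Comps.2 ⟨sum_fst_blockSize l, sum_snd_blockSize l, fun t => ?_⟩
      by_contra! ht
      have : l[t] = ([], []) := by
        simpa [blockSize, Prod.ext_iff, Nat.lt_one_iff] using ht
      exact hl (this ▸ List.getElem_mem _)
    exact ⟨_, _, ⟨le_add_of_mem_Comps hc, hc⟩, blocks_blockSize l⟩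

lemma sum_cuts {A : Type*} [AddCommMonoid A] (h : List α × List α)
    (F : List (List α × List α) → A) :
    ∑ l ∈ cuts h, F l = ∑ k ∈ Finset.range (h.1.length + h.2.length + 1),
      ∑ c ∈ Comps k h.1.length h.2.length, F (blocks c h) := by
  classical
  rw [cuts, Finset.sum_image, Finset.sum_sigma]
  rintro ⟨k, c⟩ hc ⟨k', c'⟩ hc' heq
  obtain ⟨hfst, hsnd, -⟩ := mem_Comps.1 (Finset.mem_sigma.1 hc).2
  obtain ⟨hfst', hsnd', -⟩ := mem_Comps.1 (Finset.mem_sigma.1 hc').2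
  exact List.ofFn_inj'.1 <| by
    simpa only [map_blockSize_blocks hfst hsnd, map_blockSize_blocks hfst' hsnd']
      using congrArg (List.map blockSize) heq

@[simp] lemma cuts_nil : cuts (([], []) : List α × List α) = {[]} := by
  ext l
  rw [mem_cuts, Finset.mem_singleton]
  constructor
  · rintro ⟨hjoin, hl⟩
    refine List.eq_nil_iff_forall_not_mem.2 fun b hb => hl ?_
    simp only [joinBlocks, Prod.mk.injEq, List.flatten_eq_nil_iff, List.forall_mem_map] at hjoin
    have hnil : b = ([], []) := Prod.ext (hjoin.1 b hb) (hjoin.2 b hb)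
    exact hnil ▸ hb
  · rintro rfl
    simp

lemma nil_mem_cuts {h : List α × List α} : [] ∈ cuts h ↔ h.1.length + h.2.length = 0 := by
  simp [mem_cuts, Prod.ext_iff, eq_comm]

/-- A cut split at a block boundary is a pair of cuts; hence the product of words is a morphism
for the deconcatenation coproducts. -/
lemma sum_cuts_sum_splits {A : Type*} [AddCommMonoid A] (h : List α × List α)
    (F : List (List α × List α) × List (List α × List α) → A) :
    ∑ l ∈ cuts h, ∑ p ∈ splits l, F p
      = ∑ q ∈ prodSplits splits splits h, ∑ p ∈ cuts q.1 ×ˢ cuts q.2, F p := by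
  rw [Finset.sum_sigma', Finset.sum_sigma']
  refine Finset.sum_bij' (fun s _ => ⟨(joinBlocks s.2.1, joinBlocks s.2.2), s.2⟩)
    (fun s _ => ⟨s.2.1 ++ s.2.2, s.2⟩) ?_ ?_ ?_ ?_ fun _ _ => rfl
  · rintro ⟨l, p⟩ hs
    simp only [Finset.mem_sigma, mem_cuts, mem_splits] at hs
    obtain ⟨⟨rfl, hl⟩, rfl⟩ := hs
    simp_all [mem_cuts]
  · rintro ⟨q, p⟩ hs
    simp only [Finset.mem_sigma, mem_cuts, mem_splits, mem_prodSplits, Finset.mem_product] at hs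
    obtain ⟨⟨hfst, hsnd⟩, ⟨hjoin₁, hne₁⟩, hjoin₂, hne₂⟩ := hs
    simp [mem_cuts, hfst, hsnd, hjoin₁, hne₁, hjoin₂, hne₂]
  · rintro ⟨l, p⟩ hs
    simp only [Finset.mem_sigma, mem_splits] at hs
    simp [hs.2]
  · rintro ⟨q, p⟩ hs
    simp only [Finset.mem_sigma, mem_cuts, Finset.mem_product] at hs
    simp [hs.2.1.1, hs.2.2.1]

lemma sum_cuts_convolution {β T : Type*} [NonUnitalNonAssocSemiring T]
    (m : List α × List α → β)
    (f g : List β → T) (h : List α × List α) :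
    ∑ l ∈ cuts h, ∑ p ∈ splits (l.map m), f p.1 * g p.2
      = ∑ q ∈ prodSplits splits splits h,
          (∑ l ∈ cuts q.1, f (l.map m)) * ∑ l ∈ cuts q.2, g (l.map m) := by
  simp only [sum_splits_map, sum_cuts_sum_splits, Finset.sum_product, Finset.sum_mul_sum]

end Cuts

section Words

variable {K V}

variable (K V) in
/-- The inclusion of `V = V^{⊗1}` into the tensor module. -/
noncomputable def letter : V →ₗ[K] TensorModule K V :=
  TensorAlgebra.toDirectSum.toLinearMap ∘ₗ TensorAlgebra.ι K

variable (K) in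
/-- The pure tensor `x₁ ⊗ ⋯ ⊗ x_p` of the letters of a word. -/
noncomputable def word (w : List V) : TensorModule K V :=
  (w.map (letter K V)).prod

@[simp] lemma word_nil : word K ([] : List V) = 1 := rfl

@[simp] lemma word_cons (v : V) (w : List V) : word K (v :: w) = letter K V v * word K w :=
  List.prod_cons

lemma word_ofFn {n : ℕ} (x : Fin n → V) :
    word K (List.ofFn x)
      = DirectSum.of (fun n => TensorPower K n V) n (PiTensorProduct.tprod K x) := by
  rw [word, ← TensorAlgebra.toDirectSum_tensorPower_tprod, TensorAlgebra.tprod_apply,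
    map_list_prod, List.map_ofFn, List.map_ofFn]
  rfl

lemma el_eq_word (p : ℕ) (x : ℕ → V) : el K V p x = word K (initialWord p x) :=
  (word_ofFn _).symm

lemma unitEl_eq_word : unitEl K V = word K [] :=
  (word_ofFn fun i : Fin 0 => i.elim0).symm

lemma linearMap_ext_word {N : Type*} [AddCommMonoid N] [Module K N]
    {f g : TensorModule K V →ₗ[K] N} (h : ∀ w, f (word K w) = g (word K w)) : f = g := by
  refine DirectSum.linearMap_ext K fun n => PiTensorProduct.ext <| MultilinearMap.ext fun x => ?_
  have := h (List.ofFn x)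
  rwa [word_ofFn, ← DirectSum.lof_eq_of K] at this

lemma associative_iff_word (star : TensorModule K V →ₗ[K] TensorModule K V →ₗ[K] TensorModule K V) :
    (∀ a b c, star (star a b) c = star a (star b c)) ↔
      ∀ xs ys zs, star (star (word K xs) (word K ys)) (word K zs)
        = star (word K xs) (star (word K ys) (word K zs)) := by
  refine ⟨fun h xs ys zs => h _ _ _, fun h a b c => ?_⟩
  have h_right (xs ys : List V) :
      star (star (word K xs) (word K ys)) = star (word K xs) ∘ₗ star (word K ys) :=
    linearMap_ext_word (h xs ys)
  have h_middle (xs : List V) :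
      star.flip c ∘ₗ star (word K xs) = star (word K xs) ∘ₗ star.flip c :=
    linearMap_ext_word fun ys => LinearMap.congr_fun (h_right xs ys) c
  have h_left : star.flip c ∘ₗ star.flip b = star.flip (star b c) :=
    linearMap_ext_word fun xs => LinearMap.congr_fun (h_middle xs) b
  exact LinearMap.congr_fun h_left a

variable (K V) in
/-- The projection of the tensor module onto its component `V^{⊗1} = V`. -/
noncomputable def toLetter : TensorModule K V →ₗ[K] V :=
  (PiTensorProduct.subsingletonEquiv (R := K) (s := fun _ : Fin 1 => V) 0).toLinearMap ∘ₗ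
    DirectSum.component K ℕ (fun n => TensorPower K n V) 1

@[simp] lemma toLetter_letter (v : V) : toLetter K V (letter K V v) = v := by
  simp [toLetter, letter, TensorAlgebra.toDirectSum_ι, ← DirectSum.lof_eq_of K,
    DirectSum.component.lof_self, PiTensorProduct.subsingletonEquiv_apply_tprod]

lemma toLetter_word_of_length_ne_one {w : List V} (h : w.length ≠ 1) :
    toLetter K V (word K w) = 0 := by
  have := word_ofFn (K := K) w.get
  rw [List.ofFn_get] at this
  rw [this, toLetter, LinearMap.comp_apply, ← DirectSum.lof_eq_of K, DirectSum.component.of,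
    dif_neg h, map_zero]

@[simp] lemma toLetter_one : toLetter K V 1 = 0 :=
  toLetter_word_of_length_ne_one (w := []) (by simp)

end Words

section CofreeLift

variable {K V} {H : Type*}

/-- The defining equation of the coalgebra morphism `X` from `H` to the tensor coalgebra `T^c(V)`
cofreely induced by its corestriction `toLetter ∘ X`, where `Δ` lists the terms of the coproduct
of `H` and the counit is the indicator of the elements of size zero. -/
def IsCofreeLift (Δ : H → Finset (H × H)) (size : H → ℕ) (X : H → TensorModule K V) : Prop :=
  ∀ h, X h = (if size h = 0 then 1 else 0)
    + ∑ p ∈ Δ h, letter K V (toLetter K V (X p.1)) * X p.2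

lemma IsCofreeLift.eq_of_toLetter_eq {Δ : H → Finset (H × H)} {size : H → ℕ}
    {X Y : H → TensorModule K V} (hX : IsCofreeLift Δ size X) (hY : IsCofreeLift Δ size Y)
    (hΔ : ∀ h, ∀ p ∈ Δ h, size p.1 + size p.2 = size h)
    (hzero : ∀ h, size h = 0 → toLetter K V (X h) = 0)
    (hXY : ∀ h, toLetter K V (X h) = toLetter K V (Y h)) : X = Y := by
  funext h
  induction hn : size h using Nat.strong_induction_on generalizing h with
  | _ n ih =>
    subst hn
    rw [hX, hY]
    congr 1
    refine Finset.sum_congr rfl fun p hp => ?_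
    rw [← hXY]
    by_cases hp₁ : size p.1 = 0
    · simp [hzero _ hp₁]
    · rw [ih (size p.2) (by have := hΔ h p hp; omega) p.2 rfl]

lemma isCofreeLift_word : IsCofreeLift splits List.length (word K : List V → TensorModule K V) := by
  rintro (_ | ⟨v, w⟩)
  · simp
  · rw [Finset.sum_eq_single ([v], w)]
    · simp
    · rintro ⟨a, b⟩ hp hne
      rw [toLetter_word_of_length_ne_one, map_zero, zero_mul]
      intro ha
      obtain ⟨u, rfl⟩ := List.length_eq_one_iff.1 ha
      simp_all
    · simp

lemma IsCofreeLift.eq_word {X : List V → TensorModule K V} (hX : IsCofreeLift splits List.length X)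
    (h : ∀ w, toLetter K V (X w) = toLetter K V (word K w)) : X = word K := by
  refine hX.eq_of_toLetter_eq isCofreeLift_word (fun w p hp => ?_) (fun w hw => ?_) h
  · rw [← mem_splits.1 hp, List.length_append]
  · simp [h, List.eq_nil_of_length_eq_zero hw]

end CofreeLift

section WordProduct

variable {K V} (m : List V × List V → V)

variable (K) in
/-- The product of two words, with `m` as its corestriction: the sum of the words
`m(x¹;y¹) ⊗ ⋯ ⊗ m(x^k;y^k)` over all cuts into consecutive blocks. -/
noncomputable def wordMul (h : List V × List V) : TensorModule K V :=
  ∑ l ∈ cuts h, word K (l.map m)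

/-- The product `(xs * ys) * zs` of words, for the product with corestriction `m`. -/
noncomputable def leftMul (h : List V × List V × List V) : TensorModule K V :=
  ∑ l ∈ cuts (h.1, h.2.1), wordMul K m (l.map m, h.2.2)

/-- The product `xs * (ys * zs)` of words, for the product with corestriction `m`. -/
noncomputable def rightMul (h : List V × List V × List V) : TensorModule K V :=
  ∑ l ∈ cuts (h.2.1, h.2.2), wordMul K m (h.1, l.map m)

lemma sum_cuts_counit {α T : Type*} [AddCommMonoid T] (h : List α × List α) (n : ℕ) (a : T) :
    ∑ l ∈ cuts h, (if l.length + n = 0 then a else 0)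
      = if h.1.length + h.2.length + n = 0 then a else 0 := by
  classical
  simp only [Nat.add_eq_zero_iff, List.length_eq_zero_iff, ite_and, Finset.sum_ite_eq',
    nil_mem_cuts]

lemma isCofreeLift_wordMul :
    IsCofreeLift (prodSplits splits splits) (fun h => h.1.length + h.2.length)
      (wordMul K m) := fun h => by
  calc wordMul K m h
      = ∑ l ∈ cuts h, ((if l.length + 0 = 0 then 1 else 0)
          + ∑ p ∈ splits (l.map m), letter K V (toLetter K V (word K p.1)) * word K p.2) := by
        refine Finset.sum_congr rfl fun l _ => ?_
        rw [isCofreeLift_word (l.map m), List.length_map, add_zero]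
    _ = _ := by
        rw [Finset.sum_add_distrib, sum_cuts_counit, add_zero,
          sum_cuts_convolution m (fun w => letter K V (toLetter K V (word K w)))]
        simp only [wordMul, map_sum]

lemma isCofreeLift_leftMul :
    IsCofreeLift (prodSplits splits (prodSplits splits splits))
      (fun h => h.1.length + (h.2.1.length + h.2.2.length)) (leftMul (K := K) m) := by
  rintro ⟨xs, ys, zs⟩
  calc leftMul m (xs, ys, zs)
      = ∑ l ∈ cuts (xs, ys), ((if l.length + zs.length = 0 then 1 else 0)
          + ∑ q ∈ splits zs, ∑ p ∈ splits (l.map m),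
            letter K V (toLetter K V (wordMul K m (p.1, q.1))) * wordMul K m (p.2, q.2)) := by
        refine Finset.sum_congr rfl fun l _ => ?_
        rw [isCofreeLift_wordMul, sum_prodSplits, Finset.sum_comm]
        simp only [List.length_map]
    _ = (if xs.length + ys.length + zs.length = 0 then 1 else 0)
          + ∑ q ∈ splits zs, ∑ p ∈ prodSplits splits splits (xs, ys),
            letter K V (toLetter K V (leftMul m (p.1.1, p.1.2, q.1)))
              * leftMul m (p.2.1, p.2.2, q.2) := by
        rw [Finset.sum_add_distrib, sum_cuts_counit, Finset.sum_comm]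
        congr 1
        refine Finset.sum_congr rfl fun q _ => ?_
        rw [sum_cuts_convolution m (fun w => letter K V (toLetter K V (wordMul K m (w, q.1))))
          (fun w => wordMul K m (w, q.2))]
        simp only [leftMul, map_sum]
    _ = _ := by
        rw [Finset.sum_comm]
        simp only [sum_prodSplits, add_assoc]

lemma isCofreeLift_rightMul :
    IsCofreeLift (prodSplits splits (prodSplits splits splits))
      (fun h => h.1.length + (h.2.1.length + h.2.2.length)) (rightMul (K := K) m) := by
  rintro ⟨xs, ys, zs⟩
  calc rightMul m (xs, ys, zs)
      = ∑ l ∈ cuts (ys, zs), ((if l.length + xs.length = 0 then 1 else 0)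
          + ∑ p ∈ splits xs, ∑ q ∈ splits (l.map m),
            letter K V (toLetter K V (wordMul K m (p.1, q.1))) * wordMul K m (p.2, q.2)) := by
        refine Finset.sum_congr rfl fun l _ => ?_
        rw [isCofreeLift_wordMul, sum_prodSplits]
        simp only [List.length_map, add_comm xs.length]
    _ = (if ys.length + zs.length + xs.length = 0 then 1 else 0)
          + ∑ p ∈ splits xs, ∑ q ∈ prodSplits splits splits (ys, zs),
            letter K V (toLetter K V (rightMul m (p.1, q.1.1, q.1.2)))
              * rightMul m (p.2, q.2.1, q.2.2) := by
        rw [Finset.sum_add_distrib, sum_cuts_counit, Finset.sum_comm]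
        congr 1
        refine Finset.sum_congr rfl fun p _ => ?_
        rw [sum_cuts_convolution m (fun w => letter K V (toLetter K V (wordMul K m (p.1, w))))
          (fun w => wordMul K m (p.2, w))]
        simp only [rightMul, map_sum]
    _ = _ := by
        simp only [sum_prodSplits, add_comm xs.length]

variable {m}

lemma toLetter_wordMul (hm : m ([], []) = 0) (h : List V × List V) :
    toLetter K V (wordMul K m h) = m h := by
  rw [wordMul, map_sum, Finset.sum_eq_single [h]]
  · simp
  · intro l hl hne
    refine toLetter_word_of_length_ne_one fun hlen => hne ?_
    obtain ⟨b, rfl⟩ := List.length_eq_one_iff.1 (List.length_map m ▸ hlen)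
    simpa using (mem_cuts.1 hl).1
  · intro hh
    have : h = ([], []) := by simpa [mem_cuts, eq_comm] using hh
    simp [this, hm]

lemma toLetter_leftMul (hm : m ([], []) = 0) (xs ys zs : List V) :
    toLetter K V (leftMul m (xs, ys, zs)) = ∑ l ∈ cuts (xs, ys), m (l.map m, zs) := by
  simp [leftMul, map_sum, toLetter_wordMul hm]

lemma toLetter_rightMul (hm : m ([], []) = 0) (xs ys zs : List V) :
    toLetter K V (rightMul m (xs, ys, zs)) = ∑ l ∈ cuts (ys, zs), m (xs, l.map m) := by
  simp [rightMul, map_sum, toLetter_wordMul hm]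

lemma leftMul_eq_rightMul_iff (hm : m ([], []) = 0) :
    leftMul (K := K) m = rightMul m ↔ ∀ xs ys zs,
      toLetter K V (leftMul m (xs, ys, zs)) = toLetter K V (rightMul m (xs, ys, zs)) := by
  refine ⟨fun h xs ys zs => by rw [h], fun h => ?_⟩
  refine (isCofreeLift_leftMul m).eq_of_toLetter_eq (isCofreeLift_rightMul m) ?_ ?_
    fun t => h t.1 t.2.1 t.2.2
  · rintro ⟨xs, ys, zs⟩ p hp
    simp only [mem_prodSplits, mem_splits] at hp
    obtain ⟨rfl, rfl, rfl⟩ := hp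
    simp only [List.length_append]
    omega
  · rintro ⟨xs, ys, zs⟩ hsize
    obtain ⟨rfl, rfl, rfl⟩ : xs = [] ∧ ys = [] ∧ zs = [] := by simpa using hsize
    simp [toLetter_leftMul hm, hm]

lemma wordMul_nil_right (hm : ∀ xs, m (xs, []) = toLetter K V (word K xs)) (xs : List V) :
    wordMul K m (xs, []) = word K xs := by
  have hm_nil : m ([], []) = 0 := by simp [hm]
  have hlift : IsCofreeLift splits List.length fun xs => wordMul K m (xs, []) := fun xs => by
    simpa [sum_prodSplits] using isCofreeLift_wordMul (K := K) m (xs, [])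
  exact congrFun (hlift.eq_word fun w => by rw [toLetter_wordMul hm_nil, hm]) xs

lemma wordMul_nil_left (hm : ∀ ys, m ([], ys) = toLetter K V (word K ys)) (ys : List V) :
    wordMul K m ([], ys) = word K ys := by
  have hm_nil : m ([], []) = 0 := by simp [hm]
  have hlift : IsCofreeLift splits List.length fun ys => wordMul K m ([], ys) := fun ys => by
    simpa [sum_prodSplits] using isCofreeLift_wordMul (K := K) m ([], ys)
  exact congrFun (hlift.eq_word fun w => by rw [toLetter_wordMul hm_nil, hm]) ys

end WordProduct

section Multibrace

variable {K V}
variable (M : ∀ p q : ℕ, MultilinearMap K (fun _ : Fin p => V)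
  (MultilinearMap K (fun _ : Fin q => V) V))

/-- The family `M_{pq}` as a single operation on pairs of words of arbitrary lengths. -/
def blockOp (b : List V × List V) : V :=
  M b.1.length b.2.length (fun s => b.1.getD s 0) fun s => b.2.getD s 0

lemma blockOp_ofFn {p q : ℕ} (x : Fin p → V) (y : Fin q → V) :
    blockOp M (List.ofFn x, List.ofFn y) = M p q x y := by
  rw [blockOp, List.length_ofFn, List.length_ofFn]
  simp

lemma map_blockOp_blocks {k p q : ℕ} {c : Fin k → ℕ × ℕ} (hc : c ∈ Comps k p q) (x y : ℕ → V) :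
    (blocks c (initialWord p x, initialWord q y)).map (blockOp M)
      = List.ofFn (blockValM K V M c x y) := by
  obtain ⟨rfl, rfl, -⟩ := mem_Comps.1 hc
  rw [blocks, List.map_ofFn]
  congr 1
  funext t
  simp only [Function.comp_apply, take_drop_initialWord (off1_add_le c t),
    take_drop_initialWord (off2_add_le c t), blockOp_ofFn, blockValM]

lemma sum_cuts_initialWord {A : Type*} [AddCommMonoid A] {p : ℕ} (hp : 1 ≤ p) (q : ℕ)
    (x y : ℕ → V) (F : List V → A) :
    ∑ l ∈ cuts (initialWord p x, initialWord q y), F (l.map (blockOp M))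
      = ∑ k ∈ Finset.Icc 1 (p + q), ∑ c ∈ Comps k p q,
          F (List.ofFn (blockValM K V M c x y)) := by
  have hzero : Comps 0 p q = ∅ := Finset.eq_empty_of_forall_notMem fun c hc => by
    have := (mem_Comps.1 hc).1
    simp at this
    omega
  simp only [sum_cuts, length_initialWord]
  rw [Finset.range_eq_Ico, Finset.sum_eq_sum_Ico_succ_bot (by omega), hzero, Finset.sum_empty,
    zero_add]
  exact Finset.sum_congr rfl fun k _ => Finset.sum_congr rfl fun c hc => by
    rw [map_blockOp_blocks M hc]

variable {M}

lemma rrelM_iff (hm : blockOp M ([], []) = 0) {i j : ℕ} (hi : 1 ≤ i) (hj : 1 ≤ j) (k : ℕ)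
    (x y z : ℕ → V) :
    RrelM K V M i j k x y z ↔
      toLetter K V (leftMul (blockOp M) (initialWord i x, initialWord j y, initialWord k z))
        = toLetter K V (rightMul (blockOp M)
            (initialWord i x, initialWord j y, initialWord k z)) := by
  rw [toLetter_leftMul hm, toLetter_rightMul hm,
    sum_cuts_initialWord M hi j x y fun w => blockOp M (w, initialWord k z),
    sum_cuts_initialWord M hj k y z fun w => blockOp M (initialWord i x, w)]
  simp only [initialWord, blockOp_ofFn]
  rfl

lemma blockOp_nil_right (hM00 : M 0 0 = 0)
    (hM10 : ∀ (x : Fin 1 → V) (y : Fin 0 → V), M 1 0 x y = x 0)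
    (hMp0 : ∀ p, 2 ≤ p → M p 0 = 0) :
    ∀ xs, blockOp M (xs, []) = toLetter K V (word K xs)
  | [] => by simp [blockOp, hM00]
  | [x] => by simp [blockOp, hM10]
  | x :: x' :: xs => by
    rw [toLetter_word_of_length_ne_one (by simp)]
    simp [blockOp, hMp0]

lemma blockOp_nil_left (hM00 : M 0 0 = 0)
    (hM01 : ∀ (x : Fin 0 → V) (y : Fin 1 → V), M 0 1 x y = y 0)
    (hM0q : ∀ q, 2 ≤ q → M 0 q = 0) :
    ∀ ys, blockOp M ([], ys) = toLetter K V (word K ys)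
  | [] => by simp [blockOp, hM00]
  | [y] => by simp [blockOp, hM01]
  | y :: y' :: ys => by
    rw [toLetter_word_of_length_ne_one (by simp)]
    simp [blockOp, hM0q]

lemma star_word_word (hleft : ∀ ys, blockOp M ([], ys) = toLetter K V (word K ys))
    (hright : ∀ xs, blockOp M (xs, []) = toLetter K V (word K xs))
    {star : TensorModule K V →ₗ[K] TensorModule K V →ₗ[K] TensorModule K V}
    (hunit_left : ∀ a, star (unitEl K V) a = a) (hunit_right : ∀ a, star a (unitEl K V) = a)
    (hform : ∀ p q : ℕ, 1 ≤ p → 1 ≤ q → ∀ x y : ℕ → V,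
      star (el K V p x) (el K V q y)
        = ∑ k ∈ Finset.Icc 1 (p + q), ∑ c ∈ Comps k p q,
            DirectSum.of (fun n => TensorPower K n V) k
              (PiTensorProduct.tprod K fun t : Fin k => blockValM K V M c x y t))
    (xs ys : List V) : star (word K xs) (word K ys) = wordMul K (blockOp M) (xs, ys) := by
  rcases eq_or_ne xs [] with rfl | hxs
  · rw [← unitEl_eq_word, hunit_left, wordMul_nil_left hleft]
  rcases eq_or_ne ys [] with rfl | hys
  · rw [← unitEl_eq_word, hunit_right, wordMul_nil_right hright]
  obtain ⟨x, hx⟩ := exists_initialWord_eq xs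
  obtain ⟨y, hy⟩ := exists_initialWord_eq ys
  have hpos := List.length_pos_iff.2 hxs
  have hsum := sum_cuts_initialWord M hpos ys.length x y (word K)
  rw [hx, hy] at hsum
  simpa only [el_eq_word, hx, hy, wordMul, hsum, word_ofFn]
    using hform _ _ hpos (List.length_pos_iff.2 hys) x y

end Multibrace

section Star

variable {K V} {m : List V × List V → V}
  {star : TensorModule K V →ₗ[K] TensorModule K V →ₗ[K] TensorModule K V}

lemma star_star_word_left (hstar : ∀ xs ys, star (word K xs) (word K ys) = wordMul K m (xs, ys))
    (xs ys zs : List V) :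
    star (star (word K xs) (word K ys)) (word K zs) = leftMul m (xs, ys, zs) := by
  simp only [hstar, leftMul]
  simp only [wordMul, map_sum, LinearMap.sum_apply, hstar]

lemma star_star_word_right (hstar : ∀ xs ys, star (word K xs) (word K ys) = wordMul K m (xs, ys))
    (xs ys zs : List V) :
    star (word K xs) (star (word K ys) (word K zs)) = rightMul m (xs, ys, zs) := by
  simp only [hstar, rightMul]
  simp only [wordMul, map_sum, hstar]

lemma associative_iff_leftMul_eq_rightMul
    (hstar : ∀ xs ys, star (word K xs) (word K ys) = wordMul K m (xs, ys)) :
    (∀ a b c, star (star a b) c = star a (star b c)) ↔ leftMul (K := K) m = rightMul m := by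
  simp only [associative_iff_word, star_star_word_left hstar, star_star_word_right hstar,
    funext_iff, Prod.forall]

lemma leftMul_eq_rightMul_of_eq_nil
    (hstar : ∀ xs ys, star (word K xs) (word K ys) = wordMul K m (xs, ys))
    (hunit_left : ∀ a, star (unitEl K V) a = a) (hunit_right : ∀ a, star a (unitEl K V) = a)
    {xs ys zs : List V} (h : xs = [] ∨ ys = [] ∨ zs = []) :
    leftMul (K := K) m (xs, ys, zs) = rightMul m (xs, ys, zs) := by
  rw [← star_star_word_left hstar, ← star_star_word_right hstar]
  rcases h with rfl | rfl | rfl <;> simp only [← unitEl_eq_word, hunit_left, hunit_right]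

end Star

/-- Let `M_{pq}` be multilinear operations on `V` with `M₀₀ = 0`,
`M₁₀ = M₀₁ = id`, `M_{p0} = 0 = M_{0q}` for `p, q ≥ 2`, and let `*` be the bilinear
product on the tensor module `T(V)` with unit `1 ∈ V^{⊗0}` given on pure tensors by
`(x₁⊗⋯⊗x_p) * (y₁⊗⋯⊗y_q) = Σ_{k=1}^{p+q} Σ_{(i,j)} M_{i₁j₁}(x¹;y¹) ⊗ ⋯ ⊗ M_{i_kj_k}(x^k;y^k)`.
Then `*` is associative if and only if the multibrace relations `(R_{ijk})` hold for all
`i, j, k ≥ 1`. -/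
theorem associative_iff_multibrace
    (M : ∀ p q : ℕ, MultilinearMap K (fun _ : Fin p => V)
      (MultilinearMap K (fun _ : Fin q => V) V))
    (hM00 : M 0 0 = 0)
    (hM10 : ∀ (x : Fin 1 → V) (y : Fin 0 → V), M 1 0 x y = x 0)
    (hM01 : ∀ (x : Fin 0 → V) (y : Fin 1 → V), M 0 1 x y = y 0)
    (hMp0 : ∀ p, 2 ≤ p → M p 0 = 0)
    (hM0q : ∀ q, 2 ≤ q → M 0 q = 0)
    (star : TensorModule K V →ₗ[K] TensorModule K V →ₗ[K] TensorModule K V)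
    (hunit_left : ∀ a : TensorModule K V, star (unitEl K V) a = a)
    (hunit_right : ∀ a : TensorModule K V, star a (unitEl K V) = a)
    (hform : ∀ p q : ℕ, 1 ≤ p → 1 ≤ q → ∀ x y : ℕ → V,
      star (el K V p x) (el K V q y)
        = ∑ k ∈ Finset.Icc 1 (p + q), ∑ c ∈ Comps k p q,
            DirectSum.of (fun n => TensorPower K n V) k
              (PiTensorProduct.tprod K fun t : Fin k => blockValM K V M c x y t)) :
    (∀ a b c : TensorModule K V, star (star a b) c = star a (star b c))
    ↔ (∀ i j k : ℕ, 1 ≤ i → 1 ≤ j → 1 ≤ k → ∀ x y z : ℕ → V, RrelM K V M i j k x y z) := by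
  have hleft := blockOp_nil_left hM00 hM01 hM0q
  have hright := blockOp_nil_right hM00 hM10 hMp0
  have hm : blockOp M ([], []) = 0 := by simp [hright]
  have hstar := star_word_word hleft hright hunit_left hunit_right hform
  rw [associative_iff_leftMul_eq_rightMul hstar, leftMul_eq_rightMul_iff hm]
  constructor
  · intro hassoc i j k hi hj _ x y z
    exact (rrelM_iff hm hi hj k x y z).2 (hassoc _ _ _)
  · intro hR xs ys zs
    by_cases hnil : xs = [] ∨ ys = [] ∨ zs = []
    · rw [leftMul_eq_rightMul_of_eq_nil hstar hunit_left hunit_right hnil]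
    · obtain ⟨hxs, hys, hzs⟩ : 0 < xs.length ∧ 0 < ys.length ∧ 0 < zs.length := by
        simpa [List.length_pos_iff] using hnil
      obtain ⟨x, hx⟩ := exists_initialWord_eq xs
      obtain ⟨y, hy⟩ := exists_initialWord_eq ys
      obtain ⟨z, hz⟩ := exists_initialWord_eq zs
      simpa only [hx, hy, hz]
        using (rrelM_iff hm hxs hys _ x y z).1 (hR _ _ _ hxs hys hzs x y z)

end
end

section
/- Let K be a field, R a K-module, and let * be any associative K-bilinear product on the reduced tensor module T̄(R) = ⊕_{n≥1} R^{⊗n} (extended to T(R) = K·1 ⊕ T̄(R) so that 1 is a unit). Define a bilinear operation ≻ on T̄(R) by x ≻ (v₁⊗…⊗v_l) := (x * (v₁⊗…⊗v_{l−1})) ⊗ v_l for l ≥ 2, and x ≻ v := x ⊗ v for v ∈ R, extended linearly in the second variable componentwise. Then (x * y) ≻ z = x ≻ (y ≻ z) for all x, y, z ∈ T̄(R); that is, (T̄(R), *, ≻) is a dipterous algebra. -/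
section

variable (K : Type*) [Field K] (V : Type*) [AddCommGroup V] [Module K V]

/-!
Every element of the reduced tensor module is a sum of tensors `t ⊗ v` with `v` of degree one, and
the definition of `≻` says that `a ≻ (t ⊗ v) = (a * t) ⊗ v`, the case `t = 1` being the right unit
law. Hence `(a * b) ≻ (t ⊗ v) = ((a * b) * t) ⊗ v = (a * (b * t)) ⊗ v = a ≻ (b ≻ (t ⊗ v))`, where
associativity for `t = 1` comes again from the right unit law.
-/

section

open scoped DirectSum TensorProduct

variable {R M W : Type*} [CommSemiring R] [AddCommMonoid M] [Module R M]
  [AddCommMonoid W] [Module R W]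

variable (R M) in
/-- The tensor module `⨁ n, M^{⊗n}` over a commutative semiring, where `TensorModule` asks for a
field. Its reduced part is again given by the condition `c 0 = 0`. -/
abbrev TensorSemimodule : Type _ := ⨁ n : ℕ, ⨂[R]^n M

variable (R) in
/-- The pure tensor `x₀ ⊗ ⋯ ⊗ xₙ₋₁` of degree `n` in `⨁ n, M^{⊗n}`: this is `el` over a commutative
semiring. As there, `x` is a sequence of which only the first `n` entries count, so that a
single `x` has a pure tensor in every degree. -/
noncomputable def pureTensor (n : ℕ) (x : ℕ → M) : TensorSemimodule R M :=
  DirectSum.of (fun n => ⨂[R]^n M) n (PiTensorProduct.tprod R fun i : Fin n => x i)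

theorem pureTensor_zero (x : ℕ → M) : pureTensor R 0 x = 1 :=
  congrArg (DirectSum.of (fun n => ⨂[R]^n M) 0) (congrArg _ (Subsingleton.elim _ _))

theorem pureTensor_succ (n : ℕ) (x : ℕ → M) :
    pureTensor R (n + 1) x = DirectSum.of (fun n => ⨂[R]^n M) (n + 1)
      (PiTensorProduct.tprod R (Fin.snoc (fun i : Fin n => x i) (x n))) :=
  congrArg _ (congrArg _ (Fin.snoc_init_self fun i : Fin (n + 1) => x i).symm)

theorem pureTensor_apply_of_ne {m n : ℕ} (h : m ≠ n) (x : ℕ → M) : pureTensor R m x n = 0 :=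
  DirectSum.of_eq_of_ne _ _ _ h.symm

theorem exists_pureTensor_eq_of_tprod {n : ℕ} (x : Fin n → M) (v : M) :
    ∃ y : ℕ → M, y n = v ∧
      pureTensor R n y = DirectSum.of (fun n => ⨂[R]^n M) n (PiTensorProduct.tprod R x) := by
  refine ⟨Function.extend Fin.val x fun _ => v, ?_, ?_⟩
  · exact Function.extend_apply' _ _ _ fun ⟨i, hi⟩ => i.isLt.ne hi
  · exact congrArg _ (congrArg _ (funext fun i => Fin.val_injective.extend_apply x _ i))

theorem map_eq_map_of_pureTensor {f g : TensorSemimodule R M →ₗ[R] W} {c : TensorSemimodule R M}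
    (h : ∀ n, c n ≠ 0 → ∀ x, f (pureTensor R n x) = g (pureTensor R n x)) : f c = g c := by
  classical
  rw [← DirectSum.sum_support_of c, map_sum, map_sum]
  refine Finset.sum_congr rfl fun n hn => ?_
  have agree_in_degree : f ∘ₗ DirectSum.lof R ℕ _ n = g ∘ₗ DirectSum.lof R ℕ _ n := by
    refine PiTensorProduct.ext (MultilinearMap.ext fun x => ?_)
    obtain ⟨y, -, hy⟩ := exists_pureTensor_eq_of_tprod (R := R) x 0
    have hxy := h n (DFinsupp.mem_support_iff.mp hn) y
    rwa [hy] at hxy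
  exact LinearMap.congr_fun agree_in_degree (c n)

variable {star succ : TensorSemimodule R M → TensorSemimodule R M →ₗ[R] TensorSemimodule R M}
  {rmul : M → TensorSemimodule R M →ₗ[R] TensorSemimodule R M}

theorem rmul_pureTensor
    (hrmul : ∀ (v : M) (n : ℕ) (x : ℕ → M),
      rmul v (pureTensor R n x) = DirectSum.of (fun n => ⨂[R]^n M) (n + 1)
        (PiTensorProduct.tprod R (Fin.snoc (fun i : Fin n => x i) v)))
    (n : ℕ) (x : ℕ → M) : rmul (x n) (pureTensor R n x) = pureTensor R (n + 1) x := by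
  rw [hrmul, pureTensor_succ]

theorem succ_rmul
    (hrmul : ∀ (n : ℕ) (x : ℕ → M), rmul (x n) (pureTensor R n x) = pureTensor R (n + 1) x)
    (hsucc : ∀ (a : TensorSemimodule R M) (n : ℕ) (x : ℕ → M),
      succ a (pureTensor R (n + 1) x) = rmul (x n) (star a (pureTensor R n x)))
    (a : TensorSemimodule R M) (v : M) (t : TensorSemimodule R M) :
    succ a (rmul v t) = rmul v (star a t) := by
  refine map_eq_map_of_pureTensor (f := succ a ∘ₗ rmul v) (g := rmul v ∘ₗ star a) fun n _ x => ?_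
  obtain ⟨y, rfl, hxy⟩ : ∃ y : ℕ → M, y n = v ∧ pureTensor R n y = pureTensor R n x :=
    exists_pureTensor_eq_of_tprod _ v
  rw [← hxy, LinearMap.comp_apply, LinearMap.comp_apply, hrmul, hsucc]

theorem star_assoc_of_reduced
    (hassoc : ∀ a b c : TensorSemimodule R M,
      a 0 = 0 → b 0 = 0 → c 0 = 0 → star (star a b) c = star a (star b c))
    (hunit : ∀ a : TensorSemimodule R M, star a 1 = a)
    {a b : TensorSemimodule R M} (ha : a 0 = 0) (hb : b 0 = 0) (c : TensorSemimodule R M) :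
    star (star a b) c = star a (star b c) := by
  refine map_eq_map_of_pureTensor (f := star (star a b)) (g := star a ∘ₗ star b) fun n _ x => ?_
  rw [LinearMap.comp_apply]
  rcases eq_or_ne n 0 with rfl | hn
  · rw [pureTensor_zero, hunit, hunit]
  · exact hassoc a b _ ha hb (pureTensor_apply_of_ne hn x)

theorem succ_star_of_star_assoc
    (hrmul : ∀ (n : ℕ) (x : ℕ → M), rmul (x n) (pureTensor R n x) = pureTensor R (n + 1) x)
    (hsucc : ∀ (a : TensorSemimodule R M) (n : ℕ) (x : ℕ → M),
      succ a (pureTensor R (n + 1) x) = rmul (x n) (star a (pureTensor R n x)))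
    {a b c : TensorSemimodule R M} (hab : ∀ t, star (star a b) t = star a (star b t))
    (hc : c 0 = 0) :
    succ (star a b) c = succ a (succ b c) := by
  refine map_eq_map_of_pureTensor (f := succ (star a b)) (g := succ a ∘ₗ succ b) fun n hn x => ?_
  obtain ⟨n, rfl⟩ := Nat.exists_eq_succ_of_ne_zero fun h : n = 0 => hn (h ▸ hc)
  calc succ (star a b) (pureTensor R (n + 1) x)
      = rmul (x n) (star (star a b) (pureTensor R n x)) := hsucc _ n x
    _ = rmul (x n) (star a (star b (pureTensor R n x))) := by rw [hab]
    _ = succ a (rmul (x n) (star b (pureTensor R n x))) := (succ_rmul hrmul hsucc a _ _).symm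
    _ = succ a (succ b (pureTensor R (n + 1) x)) := by rw [hsucc]

theorem reduced_tensor_module_dipterous_general
    (hrmul : ∀ (v : M) (n : ℕ) (x : ℕ → M),
      rmul v (pureTensor R n x) = DirectSum.of (fun n => ⨂[R]^n M) (n + 1)
        (PiTensorProduct.tprod R (Fin.snoc (fun i : Fin n => x i) v)))
    (hassoc : ∀ a b c : TensorSemimodule R M,
      a 0 = 0 → b 0 = 0 → c 0 = 0 → star (star a b) c = star a (star b c))
    (hunit : ∀ a : TensorSemimodule R M, star a 1 = a)
    (hsucc_one : ∀ (a : TensorSemimodule R M) (x : ℕ → M),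
      succ a (pureTensor R 1 x) = rmul (x 0) a)
    (hsucc : ∀ (a : TensorSemimodule R M) (l : ℕ), 2 ≤ l → ∀ x : ℕ → M,
      succ a (pureTensor R l x) = rmul (x (l - 1)) (star a (pureTensor R (l - 1) x))) :
    ∀ a b c : TensorSemimodule R M, a 0 = 0 → b 0 = 0 → c 0 = 0 →
      succ (star a b) c = succ a (succ b c) := by
  have hsucc_all (a : TensorSemimodule R M) (n : ℕ) (x : ℕ → M) :
      succ a (pureTensor R (n + 1) x) = rmul (x n) (star a (pureTensor R n x)) := by
    rcases n.eq_zero_or_pos with rfl | hn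
    · rw [pureTensor_zero, hunit, hsucc_one]
    · exact hsucc a (n + 1) (by lia) x
  intro a b c ha hb hc
  exact succ_star_of_star_assoc (rmul_pureTensor hrmul) hsucc_all
    (star_assoc_of_reduced hassoc hunit ha hb) hc

end

/-- Let `*` be any associative bilinear product on the reduced tensor
module `T̄(V)` (extended to `T(V)` so that `1` is a unit), and define
`x ≻ (v₁⊗⋯⊗v_l) := (x * (v₁⊗⋯⊗v_{l-1})) ⊗ v_l` for `l ≥ 2` and `x ≻ v := x ⊗ v` for
`v ∈ V`, extended linearly. Then `(x * y) ≻ z = x ≻ (y ≻ z)` for all `x, y, z ∈ T̄(V)`: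
`(T̄(V), *, ≻)` is a dipterous algebra.
(Here `rmul v` is right concatenation `− ⊗ v` by an element `v ∈ V`.) -/
theorem reduced_tensor_module_dipterous
    (star succ : TensorModule K V →ₗ[K] TensorModule K V →ₗ[K] TensorModule K V)
    (rmul : V →ₗ[K] TensorModule K V →ₗ[K] TensorModule K V)
    (hrmul : ∀ (v : V) (n : ℕ) (x : ℕ → V),
      rmul v (el K V n x)
        = DirectSum.of (fun n => TensorPower K n V) (n + 1)
            (PiTensorProduct.tprod K (Fin.snoc (fun i : Fin n => x i.1) v)))
    (hassoc : ∀ a b c : TensorModule K V,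
      a 0 = 0 → b 0 = 0 → c 0 = 0 → star (star a b) c = star a (star b c))
    (hreduced : ∀ a b : TensorModule K V, a 0 = 0 → b 0 = 0 → (star a b) 0 = 0)
    (hunit_left : ∀ a : TensorModule K V, star (unitEl K V) a = a)
    (hunit_right : ∀ a : TensorModule K V, star a (unitEl K V) = a)
    (hsucc_one : ∀ (a : TensorModule K V) (x : ℕ → V),
      succ a (el K V 1 x) = rmul (x 0) a)
    (hsucc : ∀ (a : TensorModule K V) (l : ℕ), 2 ≤ l → ∀ x : ℕ → V,
      succ a (el K V l x) = rmul (x (l - 1)) (star a (el K V (l - 1) x))) :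
    ∀ a b c : TensorModule K V, a 0 = 0 → b 0 = 0 → c 0 = 0 →
      succ (star a b) c = succ a (succ b c) :=
  reduced_tensor_module_dipterous_general (star := (star ·)) (succ := (succ ·)) (rmul := (rmul ·))
    hrmul hassoc hunit_right hsucc_one hsucc

end
end

section
/- Let K be a commutative ring and let A and B be dipterous algebras over K, i.e., K-modules with bilinear operations *_A, ≻_A and *_B, ≻_B satisfying (x*y)*z = x*(y*z) and (x*y)≻z = x≻(y≻z). Define bilinear operations on A ⊗_K B by (a⊗b) * (a'⊗b') := (a *_A a') ⊗ (b *_B b') and (a⊗b) ≻ (a'⊗b') := (a *_A a') ⊗ (b ≻_B b') on pure tensors, extended bilinearly. Then these two operations again satisfy (x*y)*z = x*(y*z) and (x*y)≻z = x≻(y≻z), so A ⊗_K B is a dipterous algebra. -/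
open TensorProduct

/-!
On a dipterous algebra the identity `(x * y) ≻ z = x ≻ (y ≻ z)` says that `x ↦ (x ≻ ·)` turns
products into compositions of endomorphisms, and associativity is the case `≻ = *`. Both axioms
for the tensor product therefore follow from one fact: if `A` acts on `M` and `B` acts on `N`, then
`A ⊗ B` acts on `M ⊗ N`. It is checked on pure tensors, where each factor is handled separately.
-/

section

variable {K A B M N : Type*} [CommSemiring K]
  [AddCommMonoid A] [Module K A] [AddCommMonoid B] [Module K B]
  [AddCommMonoid M] [Module K M] [AddCommMonoid N] [Module K N]

theorem eq_map₂_of_forall_tmul {A' B' : Type*}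
    [AddCommMonoid A'] [Module K A'] [AddCommMonoid B'] [Module K B']
    {f : A →ₗ[K] A' →ₗ[K] M} {g : B →ₗ[K] B' →ₗ[K] N}
    {h : A ⊗[K] B →ₗ[K] A' ⊗[K] B' →ₗ[K] M ⊗[K] N}
    (h_tmul : ∀ a a' b b', h (a ⊗ₜ[K] b) (a' ⊗ₜ[K] b') = f a a' ⊗ₜ[K] g b b') :
    h = TensorProduct.map₂ f g := by
  ext a b a' b'
  exact h_tmul a a' b b'

theorem map₂_map₂_assoc {mA : A →ₗ[K] A →ₗ[K] A} {mB : B →ₗ[K] B →ₗ[K] B}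
    {sA : A →ₗ[K] M →ₗ[K] M} {sB : B →ₗ[K] N →ₗ[K] N}
    (hA : ∀ a a' m, sA (mA a a') m = sA a (sA a' m))
    (hB : ∀ b b' n, sB (mB b b') n = sB b (sB b' n)) (x y : A ⊗[K] B) (z : M ⊗[K] N) :
    TensorProduct.map₂ sA sB (TensorProduct.map₂ mA mB x y) z =
      TensorProduct.map₂ sA sB x (TensorProduct.map₂ sA sB y z) := by
  have action_mul : (TensorProduct.map₂ mA mB).compr₂ (TensorProduct.map₂ sA sB) =
      (LinearMap.mul K (Module.End K (M ⊗[K] N))).compl₁₂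
        (TensorProduct.map₂ sA sB) (TensorProduct.map₂ sA sB) := by
    ext a b a' b' m n
    simp [hA, hB]
  exact LinearMap.congr_fun (LinearMap.congr_fun₂ action_mul x y) z

theorem tensorProduct_dipterous_general {mA : A →ₗ[K] A →ₗ[K] A} {mB sB : B →ₗ[K] B →ₗ[K] B}
    (mA_assoc : ∀ x y z, mA (mA x y) z = mA x (mA y z))
    (mB_assoc : ∀ x y z, mB (mB x y) z = mB x (mB y z))
    (sB_mB : ∀ x y z, sB (mB x y) z = sB x (sB y z))
    {star succ : A ⊗[K] B →ₗ[K] A ⊗[K] B →ₗ[K] A ⊗[K] B}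
    (star_tmul : ∀ a a' b b', star (a ⊗ₜ[K] b) (a' ⊗ₜ[K] b') = mA a a' ⊗ₜ[K] mB b b')
    (succ_tmul : ∀ a a' b b', succ (a ⊗ₜ[K] b) (a' ⊗ₜ[K] b') = mA a a' ⊗ₜ[K] sB b b') :
    (∀ x y z, star (star x y) z = star x (star y z)) ∧
      ∀ x y z, succ (star x y) z = succ x (succ y z) := by
  obtain rfl := eq_map₂_of_forall_tmul star_tmul
  obtain rfl := eq_map₂_of_forall_tmul succ_tmul
  exact ⟨map₂_map₂_assoc mA_assoc mB_assoc, map₂_map₂_assoc mA_assoc sB_mB⟩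

end

/-- The tensor product of two dipterous algebras, with
`(a⊗b)*(a'⊗b') := (a*a')⊗(b*b')` and `(a⊗b)≻(a'⊗b') := (a*a')⊗(b≻b')`, is again a
dipterous algebra. -/
theorem tensorProduct_dipterous (K A B : Type*) [CommRing K]
    [AddCommGroup A] [Module K A] [AddCommGroup B] [Module K B]
    (mA sA : A →ₗ[K] A →ₗ[K] A) (mB sB : B →ₗ[K] B →ₗ[K] B)
    (hA1 : ∀ x y z : A, mA (mA x y) z = mA x (mA y z))
    (hA2 : ∀ x y z : A, sA (mA x y) z = sA x (sA y z))
    (hB1 : ∀ x y z : B, mB (mB x y) z = mB x (mB y z))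
    (hB2 : ∀ x y z : B, sB (mB x y) z = sB x (sB y z))
    (star succ : A ⊗[K] B →ₗ[K] A ⊗[K] B →ₗ[K] A ⊗[K] B)
    (hstar : ∀ (a a' : A) (b b' : B),
      star (a ⊗ₜ[K] b) (a' ⊗ₜ[K] b') = mA a a' ⊗ₜ[K] mB b b')
    (hsucc : ∀ (a a' : A) (b b' : B),
      succ (a ⊗ₜ[K] b) (a' ⊗ₜ[K] b') = mA a a' ⊗ₜ[K] sB b b') :
    (∀ x y z : A ⊗[K] B, star (star x y) z = star x (star y z)) ∧
    (∀ x y z : A ⊗[K] B, succ (star x y) z = succ x (succ y z)) :=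
  tensorProduct_dipterous_general hA1 hB1 hB2 hstar hsucc
end

section
/- Let (A, *, ≻) be a dipterous algebra over a commutative ring K, i.e., (x*y)*z = x*(y*z) and (x*y)≻z = x≻(y≻z) for all x,y,z. Define x ≺ y := x*y − x≻y, and define M₁₁(u;v) := u*v − u≻v − v≻u, M₂₁(u,v;w) := (u≻v)≺w − u≻(v≺w), and M₁₂(u;v,w) := u*(v≻w) − (u*v)≻w − v≻(u*w − u≻w − w≻u) − (v≻w)≻u. Then for all u,v,w ∈ A: M₂₁(u,v;w) + M₂₁(v,u;w) + M₁₁(M₁₁(u;v);w) = M₁₁(u;M₁₁(v;w)) + M₁₂(u;v,w) + M₁₂(u;w,v). -/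
/-!
Read `(x ≻ y) ≻ z` as the value of the word `xyz`. The multibraces are the corrections to the
shuffle product: `u * v`, `u * (v ≻ w)` and `(u ≻ v) * w` are the values of the quasi-shuffles of
`u` with `v`, of `u` with `vw`, and of `uv` with `w`, with `M₁₁`, `M₁₂`, `M₂₁` as the one-letter
terms. Hence `(u * v) * w` and `u * (v * w)` have the same terms of word length at least two, and
associativity of `*` forces their one-letter terms to agree: this is the relation (R₁₁₁).
-/

namespace Dipterous

variable {K A : Type*} [CommSemiring K] [AddCommGroup A] [Module K A]

section Definitions

variable (star succ : A →ₗ[K] A →ₗ[K] A)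

/-- The operation `x ≺ y = x * y - x ≻ y` complementary to `≻`. -/
def prec (x y : A) : A :=
  star x y - succ x y

/-- The multibrace operation `M₁₁(u; v)`: the failure of `u * v = u ≻ v + v ≻ u`. -/
def multibrace₁₁ (u v : A) : A :=
  star u v - succ u v - succ v u

/-- The multibrace operation `M₂₁(u, v; w)`: the failure of `(u ≻ v) ≺ w = u ≻ (v ≺ w)`. -/
def multibrace₂₁ (u v w : A) : A :=
  prec star succ (succ u v) w - succ u (prec star succ v w)

/-- The multibrace operation `M₁₂(u; v, w)`: what `u * (v ≻ w)` has beyond the words of length at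
least two in the quasi-shuffle of `u` with `vw`. -/
def multibrace₁₂ (u v w : A) : A :=
  star u (succ v w) - succ (star u v) w - succ v (multibrace₁₁ star succ u w) - succ (succ v w) u

/-- The value `u ≻ v + v ≻ u` of the shuffle `uv + vu` of two letters. -/
def shuffle (u v : A) : A :=
  succ u v + succ v u

/-- The terms of word length at least two in the quasi-shuffle product of the letters `u`, `v`, `w`.
The first three summands are the six three-letter words, grouped by their last letter. -/
def quasiShufflePart (u v w : A) : A :=
  succ (shuffle succ u v) w + succ (shuffle succ u w) v + succ (shuffle succ v w) u
    + shuffle succ u (multibrace₁₁ star succ v w)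
    + shuffle succ v (multibrace₁₁ star succ u w)
    + shuffle succ w (multibrace₁₁ star succ u v)

end Definitions

variable {star succ : A →ₗ[K] A →ₗ[K] A}

theorem star_eq_shuffle_add_multibrace₁₁ (u v : A) :
    star u v = shuffle succ u v + multibrace₁₁ star succ u v := by
  simp only [shuffle, multibrace₁₁]
  abel

theorem succ_star_eq (u v w : A) :
    succ (star u v) w = succ (shuffle succ u v) w + succ (multibrace₁₁ star succ u v) w := by
  rw [← LinearMap.add_apply, ← map_add, ← star_eq_shuffle_add_multibrace₁₁]

theorem star_succ_right_eq_add_multibrace₁₂ (u v w : A) :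
    star u (succ v w) =
      succ (shuffle succ u v) w + succ (succ v w) u
        + succ (multibrace₁₁ star succ u v) w + succ v (multibrace₁₁ star succ u w)
        + multibrace₁₂ star succ u v w := by
  rw [multibrace₁₂, succ_star_eq (star := star)]
  abel

theorem succ_prec_eq (hdipt : ∀ x y z : A, succ (star x y) z = succ x (succ y z)) (u v w : A) :
    succ u (prec star succ v w) =
      succ (shuffle succ u w) v + succ (multibrace₁₁ star succ u w) v
        + succ u (multibrace₁₁ star succ v w) := by
  have prec_eq : prec star succ v w = succ w v + multibrace₁₁ star succ v w := by
    simp only [prec, multibrace₁₁]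
    abel
  rw [prec_eq, map_add, ← hdipt, succ_star_eq (star := star)]

theorem star_succ_left_eq_add_multibrace₂₁
    (hdipt : ∀ x y z : A, succ (star x y) z = succ x (succ y z)) (u v w : A) :
    star (succ u v) w =
      succ (succ u v) w + succ (shuffle succ u w) v
        + succ (multibrace₁₁ star succ u w) v + succ u (multibrace₁₁ star succ v w)
        + multibrace₂₁ star succ u v w := by
  rw [multibrace₂₁, succ_prec_eq hdipt, prec]
  abel

theorem star_star_left_eq_quasiShufflePart_add
    (hdipt : ∀ x y z : A, succ (star x y) z = succ x (succ y z)) (u v w : A) :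
    star (star u v) w =
      quasiShufflePart star succ u v w
        + (multibrace₂₁ star succ u v w + multibrace₂₁ star succ v u w
          + multibrace₁₁ star succ (multibrace₁₁ star succ u v) w) := by
  have expand : star (star u v) w =
      star (succ u v) w + star (succ v u) w + star (multibrace₁₁ star succ u v) w := by
    rw [star_eq_shuffle_add_multibrace₁₁ (succ := succ) u v, shuffle]
    simp only [map_add, LinearMap.add_apply]
  rw [expand, star_succ_left_eq_add_multibrace₂₁ hdipt u v w,
    star_succ_left_eq_add_multibrace₂₁ hdipt v u w,
    star_eq_shuffle_add_multibrace₁₁ (succ := succ) (multibrace₁₁ star succ u v) w]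
  simp only [quasiShufflePart, shuffle, map_add, LinearMap.add_apply]
  abel

theorem star_star_right_eq_quasiShufflePart_add (u v w : A) :
    star u (star v w) =
      quasiShufflePart star succ u v w
        + (multibrace₁₁ star succ u (multibrace₁₁ star succ v w)
          + multibrace₁₂ star succ u v w + multibrace₁₂ star succ u w v) := by
  have expand : star u (star v w) =
      star u (succ v w) + star u (succ w v) + star u (multibrace₁₁ star succ v w) := by
    rw [star_eq_shuffle_add_multibrace₁₁ (succ := succ) v w, shuffle]
    simp only [map_add]
  rw [expand, star_succ_right_eq_add_multibrace₁₂ u v w, star_succ_right_eq_add_multibrace₁₂ u w v,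
    star_eq_shuffle_add_multibrace₁₁ (succ := succ) u (multibrace₁₁ star succ v w)]
  simp only [quasiShufflePart, shuffle, map_add, LinearMap.add_apply]
  abel

end Dipterous

/-- In any dipterous algebra the induced multibrace operations `M₁₁`, `M₂₁`,
`M₁₂` satisfy the first nontrivial multibrace relation (R₁₁₁). -/
theorem dipterous_R111 (K A : Type*) [CommRing K] [AddCommGroup A] [Module K A]
    (star succ : A →ₗ[K] A →ₗ[K] A)
    (hstar : ∀ x y z : A, star (star x y) z = star x (star y z))
    (hdipt : ∀ x y z : A, succ (star x y) z = succ x (succ y z)) :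
    ∀ u v w : A,
      let prec : A → A → A := fun x y => star x y - succ x y
      let M11 : A → A → A := fun a b => star a b - succ a b - succ b a
      let M21 : A → A → A → A := fun a b c => prec (succ a b) c - succ a (prec b c)
      let M12 : A → A → A → A := fun a b c =>
        star a (succ b c) - succ (star a b) c
          - succ b (star a c - succ a c - succ c a) - succ (succ b c) a
      M21 u v w + M21 v u w + M11 (M11 u v) w
        = M11 u (M11 v w) + M12 u v w + M12 u w v := by
  intro u v w prec M11 M21 M12
  apply add_left_cancel (a := Dipterous.quasiShufflePart star succ u v w)
  calc
    Dipterous.quasiShufflePart star succ u v w + (M21 u v w + M21 v u w + M11 (M11 u v) w)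
      = star (star u v) w := (Dipterous.star_star_left_eq_quasiShufflePart_add hdipt u v w).symm
    _ = star u (star v w) := hstar u v w
    _ = Dipterous.quasiShufflePart star succ u v w + (M11 u (M11 v w) + M12 u v w + M12 u w v) :=
      Dipterous.star_star_right_eq_quasiShufflePart_add u v w
end

section
/- Let (A, *, ≻) be a dipterous algebra over a field K. Set ω^≻(a₁,…,a_k) := ((a₁≻a₂)≻…)≻a_k, and define multilinear operations M_{pq} : A^{⊗p} ⊗ A^{⊗q} → A recursively by M_{00} = 0, M_{10} = M_{01} = id, M_{p0} = 0 = M_{0q} for p,q ≥ 2, and for p,q ≥ 1: M_{pq}(x₁,…,x_p; y₁,…,y_q) := ω^≻(x₁,…,x_p) * ω^≻(y₁,…,y_q) − Σ_{k=2}^{p+q} Σ ω^≻( M_{i₁j₁}(x¹;y¹), …, M_{i_kj_k}(x^k;y^k) ), the inner sum running over all sequences (i₁,…,i_k), (j₁,…,j_k) of nonnegative integers with i₁+…+i_k = p, j₁+…+j_k = q and i_t + j_t ≥ 1, where x^t is the consecutive block x_{i₁+…+i_{t−1}+1},…,x_{i₁+…+i_t} (similarly y^t). Then the operations M_{pq}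 satisfy all the multibrace relations (R_{ijk}) for i,j,k ≥ 1: Σ_{l=1}^{i+j} Σ M_{lk}( M_{i₁j₁}(x¹;y¹) ⊗ … ⊗ M_{i_lj_l}(x^l;y^l) ; z₁⊗…⊗z_k ) = Σ_{m=1}^{j+k} Σ M_{im}( x₁⊗…⊗x_i ; M_{j₁k₁}(y¹;z¹) ⊗ … ⊗ M_{j_mk_m}(y^m;z^m) ), with inner sums over sequences of nonnegative integers summing to the appropriate totals with each pair (i_t,j_t), resp. (j_t,k_t), nonzero, and consecutive blocks as above. In other words, every dipterous algebra carries a natural multibrace algebra structure. -/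
open Finset

section Ops
variable {A : Type*} [AddCommGroup A]

/-- `M_{i_t j_t}(x^t; y^t)`: the operation `M` applied to the `t`-th consecutive blocks of
the sequences `x` and `y`, as prescribed by the composition `c`. -/
def blockVal (M : ∀ p q : ℕ, (Fin p → A) → (Fin q → A) → A)
    {k : ℕ} (c : Fin k → ℕ × ℕ) (x y : ℕ → A) (t : Fin k) : A :=
  M (c t).1 (c t).2 (fun s => x (off1 c t + s.1)) (fun s => y (off2 c t + s.1))

/-- The multibrace relation `(R_{ijk})`. -/
def Rrel (M : ∀ p q : ℕ, (Fin p → A) → (Fin q → A) → A)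
    (i j k : ℕ) (x y z : ℕ → A) : Prop :=
  ∑ l ∈ Finset.Icc 1 (i + j), ∑ c ∈ Comps l i j,
      M l k (fun t : Fin l => blockVal M c x y t) (fun s : Fin k => z s.1)
    = ∑ m ∈ Finset.Icc 1 (j + k), ∑ c ∈ Comps m j k,
        M i m (fun s : Fin i => x s.1) (fun t : Fin m => blockVal M c y z t)

/-- `ω^≻`: `omegaIter s x n = ((x₀ ≻ x₁) ≻ ⋯) ≻ x_n`. -/
def omegaIter (s : A → A → A) (x : ℕ → A) : ℕ → A
  | 0 => x 0
  | n + 1 => s (omegaIter s x n) (x (n + 1))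

end Ops

/-!
Let `x · y` be the formal sum of all the words `[M_{i₁j₁}(x¹; y¹), …, M_{i_kj_k}(x^k; y^k)]`. The
relations `(R_{ijk})` say that `(x · y) · z` and `x · (y · z)` have the same component in words of
length one. The recursion defining `M` says that `ω^≻(x · y) = ω^≻(x) * ω^≻(y)`, so that `ω^≻` takes
the same value on both products by associativity of `*`. Both products are morphisms of coalgebras
for deconcatenation of words, and a morphism `P` of coalgebras into words is determined by
`ω^≻ ∘ P`: writing `π` for the projection onto words of length one, the identity
`ω^≻(w) = π(w) + ∑_{w = w₁w₂} ω^≻(w₁) ≻ π(w₂)` determines `π ∘ P` by induction on the degree.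
-/

namespace Multibrace

/-- A graded coalgebra presented on a set `C` of basis elements: `comul c` is the formal
sum of the pairs `c₁ ⊗ c₂` occurring in the comultiplication of `c`, and the counit is the
indicator function of degree `0`. -/
class MultisetCoalgebra (C : Type*) where
  comul : C → Multiset (C × C)
  degree : C → ℕ
  degree_add_of_mem_comul {c : C} {p : C × C} (hp : p ∈ comul c) :
    degree p.1 + degree p.2 = degree c
  left_counit (c : C) :
    ((comul c).bind fun p => if degree p.1 = 0 then {p.2} else 0) = {c}
  right_counit (c : C) :
    ((comul c).bind fun p => if degree p.2 = 0 then {p.1} else 0) = {c}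
  coassoc (c : C) :
    ((comul c).bind fun p => (comul p.2).map fun q => (p.1, q.1, q.2)) =
      (comul c).bind fun p => (comul p.1).map fun q => (q.1, q.2, p.2)

open MultisetCoalgebra

section Bind

lemma product_eq_bind {α β : Type*} (s : Multiset α) (t : Multiset β) :
    s ×ˢ t = s.bind fun a => t.bind fun b => {(a, b)} := by
  simp only [Multiset.bind_singleton]
  rfl

variable {C β : Type*} [MultisetCoalgebra C]

lemma bind_left_counit (c : C) (f : C → Multiset β) :
    ((comul c).bind fun p => if degree p.1 = 0 then f p.2 else 0) = f c := by
  have h := congrArg (Multiset.bind · f) (left_counit c)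
  simpa [Multiset.bind_assoc, apply_ite (Multiset.bind · f)] using h

lemma bind_right_counit (c : C) (f : C → Multiset β) :
    ((comul c).bind fun p => if degree p.2 = 0 then f p.1 else 0) = f c := by
  have h := congrArg (Multiset.bind · f) (right_counit c)
  simpa [Multiset.bind_assoc, apply_ite (Multiset.bind · f)] using h

lemma bind_coassoc (c : C) (f : C → C → C → Multiset β) :
    ((comul c).bind fun p => (comul p.2).bind fun q => f p.1 q.1 q.2) =
      (comul c).bind fun p => (comul p.1).bind fun q => f q.1 q.2 p.2 := by
  have h := congrArg (Multiset.bind · fun t => f t.1 t.2.1 t.2.2) (coassoc c)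
  simpa [Multiset.bind_assoc, Multiset.bind_map] using h

end Bind

section Deconcatenation

variable {α : Type*}

/-- Deconcatenation: all the ways of cutting a word into a prefix and a suffix. -/
def deconcat (u : List α) : Multiset (List α × List α) :=
  (Multiset.range (u.length + 1)).map fun n => (u.take n, u.drop n)

lemma deconcat_nil : deconcat ([] : List α) = {([], [])} := rfl

lemma deconcat_cons (a : α) (u : List α) :
    deconcat (a :: u) = ([], a :: u) ::ₘ (deconcat u).map (Prod.map (a :: ·) id) := by
  simp [deconcat, Multiset.range, List.range_succ_eq_map (n := u.length + 1), Function.comp_def]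

lemma append_eq_of_mem_deconcat {u : List α} {p : List α × List α} (hp : p ∈ deconcat u) :
    p.1 ++ p.2 = u := by
  obtain ⟨n, -, rfl⟩ := Multiset.mem_map.1 hp
  exact List.take_append_drop n u

instance : MultisetCoalgebra (List α) where
  comul := deconcat
  degree := List.length
  degree_add_of_mem_comul hp := by rw [← List.length_append, append_eq_of_mem_deconcat hp]
  left_counit u := by
    cases u <;> simp [deconcat_nil, deconcat_cons, Multiset.bind_map]
  right_counit u := by
    induction u with
    | nil => simp [deconcat_nil]
    | cons a u ih =>
      have h := congrArg (Multiset.map (a :: ·)) ih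
      simpa [deconcat_cons, Multiset.bind_map, Multiset.map_bind,
        apply_ite (Multiset.map (a :: ·))] using h
  coassoc u := by
    induction u with
    | nil => simp [deconcat_nil]
    | cons a u ih =>
      have h := congrArg (Multiset.map (Prod.map (a :: ·) id)) ih
      simp only [Multiset.map_bind, Multiset.map_map, Function.comp_def, Prod.map, id] at h
      simp [deconcat_nil, deconcat_cons, Multiset.bind_map, h, Prod.map]

lemma comul_nil : comul ([] : List α) = {([], [])} := rfl

lemma comul_cons (a : α) (u : List α) :
    comul (a :: u) = ([], a :: u) ::ₘ (comul u).map (Prod.map (a :: ·) id) :=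
  deconcat_cons a u

@[simp] lemma degree_list (u : List α) : degree u = u.length := rfl

end Deconcatenation

section Prod

variable {C D : Type*} [MultisetCoalgebra C] [MultisetCoalgebra D]

instance : MultisetCoalgebra (C × D) where
  comul c := (comul c.1).bind fun p => (comul c.2).map fun q => ((p.1, q.1), (p.2, q.2))
  degree c := degree c.1 + degree c.2
  degree_add_of_mem_comul {c _} h := by
    simp only [Multiset.mem_bind, Multiset.mem_map] at h
    obtain ⟨p, hp, q, hq, rfl⟩ := h
    have := degree_add_of_mem_comul hp
    have := degree_add_of_mem_comul hq
    dsimp only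
    omega
  left_counit c := by
    have hq (p : C × C) :
        ((comul c.2).bind fun q => if degree p.1 = 0 ∧ degree q.1 = 0 then {(p.2, q.2)} else 0) =
          if degree p.1 = 0 then {(p.2, c.2)} else 0 := by
      split_ifs with hp
      · simpa [hp] using bind_left_counit c.2 fun d => {(p.2, d)}
      · simp [hp]
    simp only [Multiset.bind_assoc, Multiset.bind_map, Nat.add_eq_zero_iff, hq]
    exact bind_left_counit c.1 fun d => {(d, c.2)}
  right_counit c := by
    have hq (p : C × C) :
        ((comul c.2).bind fun q => if degree p.2 = 0 ∧ degree q.2 = 0 then {(p.1, q.1)} else 0) =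
          if degree p.2 = 0 then {(p.1, c.2)} else 0 := by
      split_ifs with hp
      · simpa [hp] using bind_right_counit c.2 fun d => {(p.1, d)}
      · simp [hp]
    simp only [Multiset.bind_assoc, Multiset.bind_map, Nat.add_eq_zero_iff, hq]
    exact bind_right_counit c.1 fun d => {(d, c.2)}
  coassoc c := by
    simp only [← Multiset.bind_singleton, Multiset.bind_assoc, Multiset.singleton_bind]
    simp only [Multiset.bind_bind (comul c.2)]
    rw [bind_coassoc c.1 fun c₁ c₂ c₃ => (comul c.2).bind fun q => (comul q.2).bind fun r =>
      {((c₁, q.1), (c₂, r.1), (c₃, r.2))}]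
    simp only [fun c₁ c₂ c₃ => bind_coassoc c.2 fun d₁ d₂ d₃ =>
      ({((c₁, d₁), (c₂, d₂), (c₃, d₃))} : Multiset ((C × D) × (C × D) × (C × D)))]

lemma comul_prod (c : C × D) : comul c =
    (comul c.1).bind fun p => (comul c.2).map fun q => ((p.1, q.1), (p.2, q.2)) := rfl

@[simp] lemma degree_prod (c : C × D) : degree c = degree c.1 + degree c.2 := rfl

end Prod

section Morphisms

variable {B C D E β : Type*} [MultisetCoalgebra B] [MultisetCoalgebra C] [MultisetCoalgebra D]
  [MultisetCoalgebra E]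

/-- A map from basis elements of `C` to formal sums of basis elements of `D` whose linear extension
commutes with the comultiplications. -/
def IsComultiplicative (F : C → Multiset D) : Prop :=
  ∀ c, (F c).bind comul = (comul c).bind fun p => F p.1 ×ˢ F p.2

/-- A map of basis elements which induces a degree-preserving morphism of coalgebras. -/
structure IsCoalgebraMap (e : C → D) : Prop where
  degree_apply (c : C) : degree (e c) = degree c
  comul_apply (c : C) : comul (e c) = (comul c).map (Prod.map e e)

namespace IsComultiplicative

lemma bind_bind_comul {F : C → Multiset D} (hF : IsComultiplicative F) (c : C)
    (f : D → D → Multiset β) :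
    ((F c).bind fun d => (comul d).bind fun q => f q.1 q.2) =
      (comul c).bind fun p => (F p.1).bind fun d₁ => (F p.2).bind fun d₂ => f d₁ d₂ := by
  have h := congrArg (Multiset.bind · fun q => f q.1 q.2) (hF c)
  simpa only [product_eq_bind, Multiset.bind_assoc, Multiset.singleton_bind] using h

lemma bind_fst {F : C → Multiset D} {G : D × B → Multiset E} (hF : IsComultiplicative F)
    (hG : IsComultiplicative G) :
    IsComultiplicative fun c : C × B => (F c.1).bind fun d => G (d, c.2) := by
  intro c
  simp only [Multiset.bind_assoc, hG _, comul_prod, Multiset.bind_map, product_eq_bind]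
  rw [hF.bind_bind_comul c.1 fun d₁ d₂ => (comul c.2).bind fun r =>
    (G (d₁, r.1)).bind fun e₁ => (G (d₂, r.2)).bind fun e₂ => {(e₁, e₂)}]
  simp only [Multiset.bind_bind (G _) (F _), Multiset.bind_bind (comul c.2) (F _)]

lemma bind_snd {F : C → Multiset D} {G : B × D → Multiset E} (hF : IsComultiplicative F)
    (hG : IsComultiplicative G) :
    IsComultiplicative fun c : B × C => (F c.2).bind fun d => G (c.1, d) := by
  intro c
  simp only [Multiset.bind_assoc, hG _, comul_prod, Multiset.bind_map, product_eq_bind]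
  simp only [Multiset.bind_bind (F _) (comul c.1)]
  refine Multiset.bind_congr fun r _ => ?_
  rw [hF.bind_bind_comul c.2 fun d₁ d₂ =>
    (G (r.1, d₁)).bind fun e₁ => (G (r.2, d₂)).bind fun e₂ => {(e₁, e₂)}]
  simp only [Multiset.bind_bind (G _) (F _)]

lemma comp_coalgebraMap {F : D → Multiset E} (hF : IsComultiplicative F) {e : C → D}
    (he : IsCoalgebraMap e) : IsComultiplicative fun c => F (e c) := by
  intro c
  simp only [hF _, he.comul_apply, Multiset.bind_map, Prod.map]

end IsComultiplicative

lemma isCoalgebraMap_prodAssoc : IsCoalgebraMap (Equiv.prodAssoc B C D) where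
  degree_apply c := by simp [add_assoc]
  comul_apply c := by
    simp [comul_prod, Multiset.map_bind, Multiset.bind_map, Multiset.bind_assoc]

lemma isCoalgebraMap_mk_nil {α : Type*} :
    IsCoalgebraMap fun c : C => (c, ([] : List α)) where
  degree_apply c := by simp
  comul_apply c := by simp [comul_prod, comul_nil, Multiset.bind_singleton, Prod.map]

lemma isCoalgebraMap_nil_mk {α : Type*} :
    IsCoalgebraMap fun c : C => (([] : List α), c) where
  degree_apply c := by simp
  comul_apply c := by simp [comul_prod, comul_nil, Prod.map]

end Morphisms

section CofreeLift

variable {A C D : Type*} [MultisetCoalgebra C] [MultisetCoalgebra D]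

/-- The component of `cofreeLift m` in words of length `k`: the formal sum of the words
`[m c₁, …, m c_k]` over all terms `c₁ ⊗ ⋯ ⊗ c_k` of the iterated comultiplication of `c` with every
`c_t` of positive degree. Words are formal: they are not taken to be multilinear in their
letters. -/
def cofreeLiftOfLength (m : C → A) : ℕ → C → Multiset (List A)
  | 0, c => if degree c = 0 then {[]} else 0
  | k + 1, c => (comul c).bind fun p =>
      if degree p.1 = 0 then 0 else (cofreeLiftOfLength m k p.2).map (m p.1 :: ·)

/-- The morphism of coalgebras from `C` to words in `A`, with deconcatenation, whose component in
words of length one is `m`. -/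
def cofreeLift (m : C → A) (c : C) : Multiset (List A) :=
  (Multiset.range (degree c + 1)).bind fun k => cofreeLiftOfLength m k c

variable (m : C → A)

lemma degree_snd_lt_of_mem_comul {c : C} {p : C × C} (hp : p ∈ comul c) (h : degree p.1 ≠ 0) :
    degree p.2 < degree c := by
  have := degree_add_of_mem_comul hp
  omega

lemma cofreeLiftOfLength_eq_zero {k : ℕ} {c : C} (h : degree c < k) :
    cofreeLiftOfLength m k c = 0 := by
  induction k generalizing c with
  | zero => omega
  | succ k ih =>
    rw [cofreeLiftOfLength]
    refine (Multiset.bind_congr fun p hp => ?_).trans (Multiset.bind_zero (comul c))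
    split_ifs with hp₁
    · rfl
    · rw [ih (by have := degree_snd_lt_of_mem_comul hp hp₁; omega), Multiset.map_zero]

lemma cofreeLift_eq_bind_range {n : ℕ} {c : C} (h : degree c < n) :
    cofreeLift m c = (Multiset.range n).bind fun k => cofreeLiftOfLength m k c := by
  obtain ⟨r, rfl⟩ := Nat.exists_eq_add_of_lt h
  induction r with
  | zero => rfl
  | succ r ih =>
    rw [ih (by omega), ← add_assoc, Multiset.range_succ (_ + 1), Multiset.cons_bind,
      cofreeLiftOfLength_eq_zero m (by omega), zero_add]

lemma cofreeLift_eq_add (c : C) :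
    cofreeLift m c = (if degree c = 0 then {[]} else 0) + (comul c).bind fun p =>
      if degree p.1 = 0 then 0 else (cofreeLift m p.2).map (m p.1 :: ·) := by
  have hrange : Multiset.range (degree c + 1) = 0 ::ₘ (Multiset.range (degree c)).map (· + 1) := by
    simp [Multiset.range, List.range_succ_eq_map]
  rw [cofreeLift, hrange, Multiset.cons_bind, Multiset.bind_map]
  simp only [cofreeLiftOfLength]
  rw [Multiset.bind_bind]
  congr 1
  refine Multiset.bind_congr fun p hp => ?_
  split_ifs with hp₁
  · exact Multiset.bind_zero _
  · rw [cofreeLift_eq_bind_range m (degree_snd_lt_of_mem_comul hp hp₁), Multiset.map_bind]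

lemma cofreeLift_of_degree_eq_zero {c : C} (hc : degree c = 0) : cofreeLift m c = {[]} := by
  simp [cofreeLift, cofreeLiftOfLength, hc]

lemma nil_notMem_cofreeLift {c : C} (hc : degree c ≠ 0) : [] ∉ cofreeLift m c := by
  rw [cofreeLift_eq_add, if_neg hc]
  simp only [zero_add, Multiset.mem_bind, not_exists, not_and]
  intro p _
  split_ifs <;> simp

lemma cofreeLift_comp_coalgebraMap {e : D → C} (he : IsCoalgebraMap e) {m' : D → A}
    (hm : ∀ d, degree d ≠ 0 → m (e d) = m' d) (d : D) :
    cofreeLift m (e d) = cofreeLift m' d := by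
  have hk (k : ℕ) : cofreeLiftOfLength m k (e d) = cofreeLiftOfLength m' k d := by
    induction k generalizing d with
    | zero => simp only [cofreeLiftOfLength, he.degree_apply]
    | succ k ih =>
      simp only [cofreeLiftOfLength, he.comul_apply, Multiset.bind_map, Prod.map, he.degree_apply,
        ih]
      refine Multiset.bind_congr fun p _ => ?_
      split_ifs with hp
      · rfl
      · rw [hm _ hp]
  simp only [cofreeLift, he.degree_apply, hk]

lemma bind_comul_map_cons (a : A) (s : Multiset (List A)) :
    (s.map (a :: ·)).bind comul =
      (s.map (a :: ·)).map (Prod.mk []) + (s.bind comul).map (Prod.map (a :: ·) id) := by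
  simp [Multiset.bind_map, comul_cons, Multiset.map_bind, Multiset.bind_cons]

lemma cofreeLift_product (c : C) (s : Multiset (List A)) :
    cofreeLift m c ×ˢ s = (if degree c = 0 then s.map (Prod.mk []) else 0) +
      (comul c).bind fun p =>
        if degree p.1 = 0 then 0 else ((cofreeLift m p.2).map (m p.1 :: ·)) ×ˢ s := by
  rw [cofreeLift_eq_add m c, Multiset.add_product]
  congr 1
  · split_ifs <;> simp [product_eq_bind, Multiset.bind_singleton]
  · rw [product_eq_bind, Multiset.bind_assoc]
    refine Multiset.bind_congr fun p _ => ?_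
    split_ifs <;> simp [product_eq_bind]

theorem isComultiplicative_cofreeLift : IsComultiplicative (cofreeLift m) := by
  intro c
  induction hn : degree c using Nat.strong_induction_on generalizing c with
  | _ n ih =>
  subst hn
  let T (c₁ c₂ c₃ : C) : Multiset (List A × List A) :=
    if degree c₁ = 0 then 0 else ((cofreeLift m c₂).map (m c₁ :: ·)) ×ˢ cofreeLift m c₃
  have hleft : (cofreeLift m c).bind comul = (cofreeLift m c).map (Prod.mk []) +
      (comul c).bind fun p => (comul p.2).bind fun q => T p.1 q.1 q.2 := by
    have hunit : (if degree c = 0 then {[]} else 0 : Multiset (List A)).bind comul =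
        (if degree c = 0 then {[]} else 0 : Multiset (List A)).map (Prod.mk []) := by
      split_ifs <;> simp [comul_nil]
    rw [cofreeLift_eq_add, Multiset.add_bind, Multiset.map_add, hunit, add_assoc,
      Multiset.bind_assoc, Multiset.map_bind, ← Multiset.bind_add]
    refine congrArg _ (Multiset.bind_congr fun p hp => ?_)
    simp only [T]
    split_ifs with hp₁
    · simp
    · rw [bind_comul_map_cons, ih _ (degree_snd_lt_of_mem_comul hp hp₁) _ rfl]
      simp [product_eq_bind, Multiset.map_bind, Multiset.bind_map]
  have hright : ((comul c).bind fun p => cofreeLift m p.1 ×ˢ cofreeLift m p.2) =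
      (cofreeLift m c).map (Prod.mk []) +
      (comul c).bind fun p => (comul p.1).bind fun q => T q.1 q.2 p.2 := by
    simp only [cofreeLift_product, Multiset.bind_add, T,
      bind_left_counit c fun d => (cofreeLift m d).map (Prod.mk [])]
  rw [hleft, hright, bind_coassoc]

end CofreeLift

section Sums

variable {A B C : Type*} [AddCommMonoid B] [MultisetCoalgebra C]

lemma map_multiset_sum₂ {α β A₁ A₂ : Type*} [AddCommMonoid A₁] [AddCommMonoid A₂]
    (φ : A₁ →+ A₂ →+ B) (s : Multiset α) (t : Multiset β) (f : α → A₁) (g : β → A₂) :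
    φ (s.map f).sum (t.map g).sum = (s.map fun a => (t.map fun b => φ (f a) (g b)).sum).sum := by
  rw [← AddMonoidHom.flip_apply, map_multiset_sum (φ.flip (t.map g).sum), Multiset.map_map]
  simp only [Function.comp_def, AddMonoidHom.flip_apply]
  simp only [Function.comp_def, map_multiset_sum, Multiset.map_map]

lemma sum_map_bind {α β : Type*} (s : Multiset α) (F : α → Multiset β) (f : β → B) :
    ((s.bind F).map f).sum = (s.map fun a => ((F a).map f).sum).sum := by
  rw [Multiset.map_bind, Multiset.sum_bind]

lemma sum_left_counit (c : C) (f : C → B) :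
    ((comul c).map fun p => if degree p.1 = 0 then f p.2 else 0).sum = f c := by
  have h := congrArg Multiset.sum (bind_left_counit c fun d => {f d})
  simpa [Multiset.sum_bind, apply_ite Multiset.sum] using h

lemma sum_right_counit (c : C) (f : C → B) :
    ((comul c).map fun p => if degree p.2 = 0 then f p.1 else 0).sum = f c := by
  have h := congrArg Multiset.sum (bind_right_counit c fun d => {f d})
  simpa [Multiset.sum_bind, apply_ite Multiset.sum] using h

lemma sum_cofreeLift_eq_add (m : C → A) (f : List A → B) (c : C) :
    ((cofreeLift m c).map f).sum = (if degree c = 0 then f [] else 0) +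
      ((comul c).map fun p => if degree p.1 = 0 then 0 else
        ((cofreeLift m p.2).map fun w => f (m p.1 :: w)).sum).sum := by
  rw [cofreeLift_eq_add, Multiset.map_add, Multiset.sum_add, sum_map_bind]
  congr 1
  · split_ifs <;> simp
  · refine congrArg _ (Multiset.map_congr rfl fun p _ => ?_)
    split_ifs <;> simp

end Sums

section Letter

variable {A B C : Type*} [Zero A] [AddCommMonoid B] [MultisetCoalgebra C]

/-- The projection of a word onto its component of length one: the letter `a` if the word is `[a]`,
and `0` otherwise. -/
def letter : List A → A
  | [a] => a
  | _ => 0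

lemma letter_cons (a : A) (w : List A) : letter (a :: w) = if w = [] then a else 0 := by
  cases w <;> simp [letter]

lemma sum_cofreeLift_letter {f : List A → B} (hf : ∀ w, 0 ∈ w → f w = 0) (u : List A) :
    ((cofreeLift letter u).map f).sum = f u := by
  induction u generalizing f with
  | nil => simp [cofreeLift_of_degree_eq_zero]
  | cons a u ih =>
    have hp (p : List A × List A) :
        ((cofreeLift letter p.2).map fun w => f (letter (a :: p.1) :: w)).sum =
          if p.1.length = 0 then ((cofreeLift letter p.2).map fun w => f (a :: w)).sum else 0 := by
      simp only [letter_cons, List.length_eq_zero_iff]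
      split_ifs <;> simp [hf]
    rw [sum_cofreeLift_eq_add, comul_cons]
    simp only [Multiset.map_cons, Multiset.map_map, Multiset.sum_cons, Function.comp_def, Prod.map,
      id, hp, degree_list, List.length_cons, List.length_nil, Nat.add_one_ne_zero, if_false,
      if_true, zero_add]
    exact (sum_left_counit u fun v => ((cofreeLift letter v).map fun w => f (a :: w)).sum).trans
      (ih fun w hw => hf _ (List.mem_cons_of_mem a hw))

end Letter

section Omega

variable {A C : Type*} [AddCommMonoid A] [MultisetCoalgebra C] (succ : A →+ A →+ A)

/-- The left-bracketed product `ω^≻(a₁,…,a_k) = ((a₁ ≻ a₂) ≻ ⋯) ≻ a_k` of a word, with the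
convention that the empty word is sent to `0`. -/
def omegaWord : List A → A
  | [] => 0
  | a :: w => w.foldl (fun b c => succ b c) a

lemma foldl_eq_add_sum_comul (a : A) (w : List A) :
    w.foldl (fun b c => succ b c) a = (if w = [] then a else 0) +
      ((comul w).map fun p => succ (p.1.foldl (fun b c => succ b c) a) (letter p.2)).sum := by
  induction w generalizing a with
  | nil => simp [comul_nil, letter]
  | cons b w ih =>
    rw [List.foldl_cons, ih, comul_cons]
    simp only [Multiset.map_cons, Multiset.map_map, Multiset.sum_cons, Function.comp_def, Prod.map,
      List.foldl_cons, List.foldl_nil, letter_cons, reduceCtorEq, if_false, id, zero_add]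
    split_ifs <;> simp

lemma omegaWord_eq_letter_add_sum_comul (w : List A) :
    omegaWord succ w =
      letter w + ((comul w).map fun p => succ (omegaWord succ p.1) (letter p.2)).sum := by
  cases w with
  | nil => simp [omegaWord, letter, comul_nil]
  | cons a w =>
    simp [omegaWord, letter_cons, comul_cons, foldl_eq_add_sum_comul succ a w, Prod.map]

lemma omegaWord_append_singleton {w : List A} (hw : w ≠ []) (a : A) :
    omegaWord succ (w ++ [a]) = succ (omegaWord succ w) a := by
  cases w with
  | nil => exact absurd rfl hw
  | cons b w => simp [omegaWord]

lemma omegaWord_eq_zero_of_mem {w : List A} (hw : 0 ∈ w) : omegaWord succ w = 0 := by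
  induction w using List.reverseRecOn with
  | nil => simp at hw
  | append_singleton w a ih =>
    rcases eq_or_ne w [] with rfl | hne
    · exact (List.mem_singleton.1 hw).symm
    rw [omegaWord_append_singleton succ hne]
    rcases List.mem_append.1 hw with hw | hw
    · simp [ih hw]
    · simp [← List.mem_singleton.1 hw]

lemma sum_omegaWord_eq_add {P : C → Multiset (List A)} (hP : IsComultiplicative P) (c : C) :
    ((P c).map (omegaWord succ)).sum = ((P c).map letter).sum +
      ((comul c).map fun p =>
        succ ((P p.1).map (omegaWord succ)).sum ((P p.2).map letter).sum).sum := by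
  have h := congrArg Multiset.sum
    (hP.bind_bind_comul c fun w₁ w₂ => {succ (omegaWord succ w₁) (letter w₂)})
  simp only [Multiset.bind_singleton, Multiset.sum_bind] at h
  simp only [map_multiset_sum₂, ← h, ← Multiset.sum_map_add,
    ← omegaWord_eq_letter_add_sum_comul]

theorem sum_letter_eq_of_sum_omegaWord_eq [IsRightCancelAdd A] {P Q : C → Multiset (List A)}
    (hP : IsComultiplicative P) (hQ : IsComultiplicative Q)
    (hω : ∀ c, ((P c).map (omegaWord succ)).sum = ((Q c).map (omegaWord succ)).sum)
    (hω₀ : ∀ c, degree c = 0 → ((P c).map (omegaWord succ)).sum = 0) (c : C) :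
    ((P c).map letter).sum = ((Q c).map letter).sum := by
  induction hn : degree c using Nat.strong_induction_on generalizing c with
  | _ n ih =>
  subst hn
  have hsucc : ∀ p ∈ comul c,
      succ ((P p.1).map (omegaWord succ)).sum ((P p.2).map letter).sum =
        succ ((Q p.1).map (omegaWord succ)).sum ((Q p.2).map letter).sum := by
    intro p hp
    rw [← hω]
    by_cases hp₁ : degree p.1 = 0
    · simp [hω₀ _ hp₁]
    · rw [ih _ (degree_snd_lt_of_mem_comul hp hp₁) _ rfl]
  have h := hω c
  rw [sum_omegaWord_eq_add succ hP, sum_omegaWord_eq_add succ hQ, Multiset.map_congr rfl hsucc] at h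
  exact add_right_cancel h

lemma sum_letter_cofreeLift (m : C → A) {c : C} (hc : degree c ≠ 0) :
    ((cofreeLift m c).map letter).sum = m c := by
  rw [sum_cofreeLift_eq_add, if_neg hc, zero_add, ← sum_right_counit c m]
  refine congrArg _ (Multiset.map_congr rfl fun p hp => ?_)
  have hdeg := degree_add_of_mem_comul hp
  by_cases hp₂ : degree p.2 = 0
  · rw [if_neg (by omega), if_pos hp₂, cofreeLift_of_degree_eq_zero m hp₂]
    simp [letter]
  · rw [if_neg hp₂, ite_eq_left_iff]
    refine fun _ => Multiset.sum_eq_zero fun a ha => ?_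
    obtain ⟨w, hw, rfl⟩ := Multiset.mem_map.1 ha
    rw [letter_cons, if_neg (ne_of_mem_of_not_mem hw (nil_notMem_cofreeLift m hp₂))]

end Omega

section Brace

variable {A : Type*} [AddCommMonoid A]

/-- The conditions characterising the operations `m (x, y) = M_{pq}(x; y)` obtained from `*` and
`≻`: the recursion for `M_{pq}` with `p, q ≥ 1` says that the sum of `ω^≻` over all the words
`[M_{i₁j₁}(x¹; y¹), …, M_{i_kj_k}(x^k; y^k)]`, now including `k = 1`, is `ω^≻(x) * ω^≻(y)`. -/
structure IsDipterousBrace (star succ : A →+ A →+ A) (m : List A × List A → A) : Prop where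
  right_unit {x : List A} (hx : x ≠ []) : m (x, []) = letter x
  left_unit {y : List A} (hy : y ≠ []) : m ([], y) = letter y
  star_omegaWord {x y : List A} (hx : x ≠ []) (hy : y ≠ []) :
    ((cofreeLift m (x, y)).map (omegaWord succ)).sum = star (omegaWord succ x) (omegaWord succ y)

namespace IsDipterousBrace

variable {star succ : A →+ A →+ A} {m : List A × List A → A} (hm : IsDipterousBrace star succ m)

include hm

lemma sum_cofreeLift_right_nil {f : List A → A} (hf : ∀ w, 0 ∈ w → f w = 0) (x : List A) :
    ((cofreeLift m (x, [])).map f).sum = f x := by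
  rw [cofreeLift_comp_coalgebraMap m isCoalgebraMap_mk_nil (m' := letter)
    (fun x hx => hm.right_unit (List.length_pos_iff.1 (Nat.pos_of_ne_zero hx)))]
  exact sum_cofreeLift_letter hf x

lemma sum_cofreeLift_left_nil {f : List A → A} (hf : ∀ w, 0 ∈ w → f w = 0) (y : List A) :
    ((cofreeLift m ([], y)).map f).sum = f y := by
  rw [cofreeLift_comp_coalgebraMap m isCoalgebraMap_nil_mk (m' := letter)
    (fun y hy => hm.left_unit (List.length_pos_iff.1 (Nat.pos_of_ne_zero hy)))]
  exact sum_cofreeLift_letter hf y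

lemma sum_omegaWord_cofreeLift_right_nil (x : List A) :
    ((cofreeLift m (x, [])).map (omegaWord succ)).sum = omegaWord succ x :=
  hm.sum_cofreeLift_right_nil (fun _ => omegaWord_eq_zero_of_mem succ) x

lemma sum_omegaWord_cofreeLift_left_nil (y : List A) :
    ((cofreeLift m ([], y)).map (omegaWord succ)).sum = omegaWord succ y :=
  hm.sum_cofreeLift_left_nil (fun _ => omegaWord_eq_zero_of_mem succ) y

lemma sum_omegaWord_cofreeLift_eq_zero_of_mem_left {x : List A} (y : List A) (hx : 0 ∈ x) :
    ((cofreeLift m (x, y)).map (omegaWord succ)).sum = 0 := by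
  rcases eq_or_ne y [] with rfl | hy
  · rw [hm.sum_omegaWord_cofreeLift_right_nil, omegaWord_eq_zero_of_mem succ hx]
  · rw [hm.star_omegaWord (List.ne_nil_of_mem hx) hy, omegaWord_eq_zero_of_mem succ hx, map_zero,
      AddMonoidHom.zero_apply]

lemma sum_omegaWord_cofreeLift_eq_zero_of_mem_right (x : List A) {y : List A} (hy : 0 ∈ y) :
    ((cofreeLift m (x, y)).map (omegaWord succ)).sum = 0 := by
  rcases eq_or_ne x [] with rfl | hx
  · rw [hm.sum_omegaWord_cofreeLift_left_nil, omegaWord_eq_zero_of_mem succ hy]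
  · rw [hm.star_omegaWord hx (List.ne_nil_of_mem hy), omegaWord_eq_zero_of_mem succ hy, map_zero]

lemma sum_omegaWord_assoc (hstar : ∀ a b c : A, star (star a b) c = star a (star b c))
    (x y z : List A) :
    (((cofreeLift m (x, y)).bind fun w => cofreeLift m (w, z)).map (omegaWord succ)).sum =
      (((cofreeLift m (y, z)).bind fun w => cofreeLift m (x, w)).map (omegaWord succ)).sum := by
  simp only [sum_map_bind]
  rcases eq_or_ne x [] with rfl | hx
  · simp only [hm.sum_omegaWord_cofreeLift_left_nil]
    exact hm.sum_cofreeLift_left_nil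
      (fun w hw => hm.sum_omegaWord_cofreeLift_eq_zero_of_mem_left z hw) y
  rcases eq_or_ne z [] with rfl | hz
  · simp only [hm.sum_omegaWord_cofreeLift_right_nil]
    exact (hm.sum_cofreeLift_right_nil
      (fun w hw => hm.sum_omegaWord_cofreeLift_eq_zero_of_mem_right x hw) y).symm
  rcases eq_or_ne y [] with rfl | hy
  · rw [hm.sum_cofreeLift_right_nil
      fun w hw => hm.sum_omegaWord_cofreeLift_eq_zero_of_mem_left z hw,
      hm.sum_cofreeLift_left_nil
      fun w hw => hm.sum_omegaWord_cofreeLift_eq_zero_of_mem_right x hw]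
  have hleft : ∀ w ∈ cofreeLift m (x, y), ((cofreeLift m (w, z)).map (omegaWord succ)).sum =
      star (omegaWord succ w) (omegaWord succ z) := fun w hw =>
    hm.star_omegaWord (ne_of_mem_of_not_mem hw (nil_notMem_cofreeLift m (by simp [hx]))) hz
  have hright : ∀ w ∈ cofreeLift m (y, z), ((cofreeLift m (x, w)).map (omegaWord succ)).sum =
      star (omegaWord succ x) (omegaWord succ w) := fun w hw =>
    hm.star_omegaWord hx (ne_of_mem_of_not_mem hw (nil_notMem_cofreeLift m (by simp [hy])))
  rw [Multiset.map_congr rfl hleft, Multiset.map_congr rfl hright]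
  calc ((cofreeLift m (x, y)).map fun w => star (omegaWord succ w) (omegaWord succ z)).sum
      = star ((cofreeLift m (x, y)).map (omegaWord succ)).sum (omegaWord succ z) := by
        simpa using (map_multiset_sum₂ star _ {omegaWord succ z} (omegaWord succ) id).symm
    _ = star (omegaWord succ x) ((cofreeLift m (y, z)).map (omegaWord succ)).sum := by
        rw [hm.star_omegaWord hx hy, hm.star_omegaWord hy hz, hstar]
    _ = ((cofreeLift m (y, z)).map fun w => star (omegaWord succ x) (omegaWord succ w)).sum := by
        rw [map_multiset_sum, Multiset.map_map]
        rfl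

/-- The relations `(R_{ijk})`, for words `x`, `y`, `z` of lengths `i`, `j`, `k`. -/
theorem sum_brace_assoc [IsRightCancelAdd A]
    (hstar : ∀ a b c : A, star (star a b) c = star a (star b c))
    {x y z : List A} (hxy : x.length + y.length ≠ 0) (hyz : y.length + z.length ≠ 0) :
    ((cofreeLift m (x, y)).map fun w => m (w, z)).sum =
      ((cofreeLift m (y, z)).map fun w => m (x, w)).sum := by
  have hmul : IsComultiplicative (cofreeLift m) := isComultiplicative_cofreeLift m
  have h := sum_letter_eq_of_sum_omegaWord_eq succ (hmul.bind_fst hmul)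
    ((hmul.bind_snd hmul).comp_coalgebraMap isCoalgebraMap_prodAssoc)
    (fun c => hm.sum_omegaWord_assoc hstar c.1.1 c.1.2 c.2) (fun c hc => by
      simp only [degree_prod, Nat.add_eq_zero_iff, degree_list, List.length_eq_zero_iff] at hc
      obtain ⟨⟨h₁, h₂⟩, h₃⟩ := hc
      simp [h₁, h₂, h₃, cofreeLift_of_degree_eq_zero, omegaWord]) ((x, y), z)
  have hleft : ∀ w ∈ cofreeLift m (x, y), ((cofreeLift m (w, z)).map letter).sum = m (w, z) := by
    intro w hw
    have hne : w ≠ [] := ne_of_mem_of_not_mem hw (nil_notMem_cofreeLift m hxy)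
    exact sum_letter_cofreeLift m (by simp [hne])
  have hright : ∀ w ∈ cofreeLift m (y, z), ((cofreeLift m (x, w)).map letter).sum = m (x, w) := by
    intro w hw
    have hne : w ≠ [] := ne_of_mem_of_not_mem hw (nil_notMem_cofreeLift m hyz)
    exact sum_letter_cofreeLift m (by simp [hne])
  simpa only [sum_map_bind, Equiv.prodAssoc_apply, Multiset.map_congr rfl hleft,
    Multiset.map_congr rfl hright] using h

end IsDipterousBrace

end Brace

section Compositions

variable {A : Type*}

/-- The word `[x 0, …, x (n - 1)]`. -/
def initialList (n : ℕ) (x : ℕ → A) : List A := List.ofFn fun i : Fin n => x i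

@[simp] lemma length_initialList (n : ℕ) (x : ℕ → A) : (initialList n x).length = n :=
  List.length_ofFn

lemma initialList_getD (u : List A) (a : A) : initialList u.length (fun n => u.getD n a) = u :=
  List.ext_getElem (by simp) fun i h₁ h₂ => by simp [initialList]

lemma take_initialList {i n : ℕ} (h : i ≤ n) (x : ℕ → A) :
    (initialList n x).take i = initialList i x :=
  List.ext_getElem (by simpa using h) fun j h₁ h₂ => by simp [initialList]

lemma drop_initialList (i n : ℕ) (x : ℕ → A) :
    (initialList n x).drop i = initialList (n - i) fun t => x (i + t) :=
  List.ext_getElem (by simp) fun j h₁ h₂ => by simp [initialList]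

lemma sum_comul_initialList {B : Type*} [AddCommMonoid B] (p q : ℕ) (x y : ℕ → A)
    (g : (List A × List A) × (List A × List A) → B) :
    ((comul (initialList p x, initialList q y)).map g).sum =
      ∑ ij ∈ range (p + 1) ×ˢ range (q + 1), g ((initialList ij.1 x, initialList ij.2 y),
        (initialList (p - ij.1) fun t => x (ij.1 + t),
          initialList (q - ij.2) fun t => y (ij.2 + t))) := by
  have h (n : ℕ) (x : ℕ → A) : comul (initialList n x) = (Multiset.range (n + 1)).map fun i =>
      (initialList i x, initialList (n - i) fun t => x (i + t)) := by
    change deconcat _ = _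
    rw [deconcat, length_initialList]
    refine Multiset.map_congr rfl fun i hi => ?_
    rw [take_initialList (Nat.le_of_lt_succ (Multiset.mem_range.1 hi)), drop_initialList]
  rw [comul_prod, h, h, sum_product]
  simp only [Multiset.bind_map, Multiset.map_map, Multiset.map_bind, Multiset.sum_bind,
    Function.comp_def]
  rfl

lemma mem_Comps {k p q : ℕ} {c : Fin k → ℕ × ℕ} :
    c ∈ Comps k p q ↔
      (∑ t, (c t).1) = p ∧ (∑ t, (c t).2) = q ∧ ∀ t, 1 ≤ (c t).1 + (c t).2 := by
  simp only [Comps, mem_filter, Fintype.mem_piFinset, mem_product, mem_range,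
    and_iff_right_iff_imp]
  rintro ⟨rfl, rfl, -⟩ t
  simp only [Nat.lt_succ_iff]
  exact ⟨single_le_sum_of_canonicallyOrdered (f := fun t => (c t).1) (mem_univ t),
    single_le_sum_of_canonicallyOrdered (f := fun t => (c t).2) (mem_univ t)⟩

lemma cons_mem_Comps {k p q : ℕ} {ij : ℕ × ℕ} {c : Fin k → ℕ × ℕ} :
    (Fin.cons ij c : Fin (k + 1) → ℕ × ℕ) ∈ Comps (k + 1) p q ↔
      ij ∈ range (p + 1) ×ˢ range (q + 1) ∧ ij.1 + ij.2 ≠ 0 ∧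
        c ∈ Comps k (p - ij.1) (q - ij.2) := by
  simp only [mem_Comps, Fin.sum_univ_succ, Fin.forall_fin_succ, Fin.cons_zero, Fin.cons_succ,
    mem_product, mem_range]
  grind

lemma sum_Comps_succ {B : Type*} [AddCommMonoid B] (k p q : ℕ)
    (φ : (Fin (k + 1) → ℕ × ℕ) → B) :
    ∑ c ∈ Comps (k + 1) p q, φ c =
      ∑ ij ∈ range (p + 1) ×ˢ range (q + 1), if ij.1 + ij.2 = 0 then 0 else
        ∑ c ∈ Comps k (p - ij.1) (q - ij.2), φ (Fin.cons ij c) := by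
  simp only [← ite_not (_ = 0)]
  rw [← sum_filter, sum_sigma']
  refine sum_nbij' (fun c => ⟨c 0, Fin.tail c⟩) (fun s => Fin.cons s.1 s.2) ?_ ?_ ?_ ?_ ?_
  · intro c hc
    rw [← Fin.cons_self_tail c, cons_mem_Comps] at hc
    simpa [and_assoc] using hc
  · intro s hs
    rw [cons_mem_Comps]
    simpa [and_assoc] using hs
  all_goals simp

lemma off1_cons_succ {k : ℕ} (ij : ℕ × ℕ) (c : Fin k → ℕ × ℕ) (t : Fin k) :
    off1 (Fin.cons ij c : Fin (k + 1) → ℕ × ℕ) t.succ = ij.1 + off1 c t := by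
  simp [off1, sum_filter, Fin.sum_univ_succ]

lemma off2_cons_succ {k : ℕ} (ij : ℕ × ℕ) (c : Fin k → ℕ × ℕ) (t : Fin k) :
    off2 (Fin.cons ij c : Fin (k + 1) → ℕ × ℕ) t.succ = ij.2 + off2 c t := by
  simp [off2, sum_filter, Fin.sum_univ_succ]

variable (M : ∀ p q : ℕ, (Fin p → A) → (Fin q → A) → A)

lemma blockVal_cons_zero {k : ℕ} (ij : ℕ × ℕ) (c : Fin k → ℕ × ℕ) (x y : ℕ → A) :
    blockVal M (Fin.cons ij c : Fin (k + 1) → ℕ × ℕ) x y 0 =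
      M ij.1 ij.2 (fun s => x s) (fun s => y s) := by
  have h₁ : off1 (Fin.cons ij c : Fin (k + 1) → ℕ × ℕ) 0 = 0 := by simp [off1]
  have h₂ : off2 (Fin.cons ij c : Fin (k + 1) → ℕ × ℕ) 0 = 0 := by simp [off2]
  simp only [blockVal, h₁, h₂, zero_add]
  rfl

lemma blockVal_cons_succ {k : ℕ} (ij : ℕ × ℕ) (c : Fin k → ℕ × ℕ) (x y : ℕ → A) (t : Fin k) :
    blockVal M (Fin.cons ij c : Fin (k + 1) → ℕ × ℕ) x y t.succ =
      blockVal M c (fun n => x (ij.1 + n)) (fun n => y (ij.2 + n)) t := by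
  simp only [blockVal, off1_cons_succ, off2_cons_succ, add_assoc]
  rfl

/-- The operations `M` as a single function on pairs of words. -/
def listOp (c : List A × List A) : A := M c.1.length c.2.length c.1.get c.2.get

lemma listOp_ofFn {p q : ℕ} (f : Fin p → A) (g : Fin q → A) :
    listOp M (List.ofFn f, List.ofFn g) = M p q f g := by
  have key {p' q' : ℕ} (f' : Fin p' → A) (g' : Fin q' → A) (hp : p' = p) (hq : q' = q)
      (hf : ∀ i, f' i = f (Fin.cast hp i)) (hg : ∀ i, g' i = g (Fin.cast hq i)) :
      M p' q' f' g' = M p q f g := by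
    subst hp hq
    rw [show f' = f from funext hf, show g' = g from funext hg]
  exact key _ _ List.length_ofFn List.length_ofFn (fun _ => by simp; rfl) (fun _ => by simp; rfl)

variable {B : Type*} [AddCommMonoid B]

lemma sum_cofreeLiftOfLength_listOp (k p q : ℕ) (x y : ℕ → A) (f : List A → B) :
    ((cofreeLiftOfLength (listOp M) k (initialList p x, initialList q y)).map f).sum =
      ∑ c ∈ Comps k p q, f (List.ofFn (blockVal M c x y)) := by
  induction k generalizing p q x y f with
  | zero =>
    have hComps : Comps 0 p q = if p + q = 0 then univ else ∅ := by
      ext c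
      simp only [mem_Comps, univ_eq_empty, sum_empty, IsEmpty.forall_iff, and_true]
      split_ifs
      · exact iff_of_true (by omega) (mem_univ c)
      · exact iff_of_false (by omega) (notMem_empty c)
    simp only [cofreeLiftOfLength, degree_prod, degree_list, length_initialList, hComps]
    split_ifs <;> simp
  | succ k ih =>
    rw [cofreeLiftOfLength, Multiset.map_bind, Multiset.sum_bind, sum_comul_initialList,
      sum_Comps_succ]
    refine sum_congr rfl fun ij _ => ?_
    simp only [degree_prod, degree_list, length_initialList]
    split_ifs
    · rfl
    · simp only [Multiset.map_map, Function.comp_def, ih, List.ofFn_succ, blockVal_cons_zero,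
        blockVal_cons_succ]
      simp only [initialList, listOp_ofFn]

lemma sum_cofreeLift_listOp {p q : ℕ} (h : p + q ≠ 0) (x y : ℕ → A) (f : List A → B) :
    ((cofreeLift (listOp M) (initialList p x, initialList q y)).map f).sum =
      ∑ k ∈ Icc 1 (p + q), ∑ c ∈ Comps k p q, f (List.ofFn (blockVal M c x y)) := by
  simp only [← sum_cofreeLiftOfLength_listOp]
  rw [cofreeLift, Multiset.map_bind, Multiset.sum_bind, degree_prod, degree_list, degree_list,
    length_initialList, length_initialList]
  change ∑ k ∈ range (p + q + 1), _ = _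
  rw [Nat.range_succ_eq_Icc_zero, ← add_sum_Ioc_eq_sum_Icc (Nat.zero_le _),
    ← Icc_add_one_left_eq_Ioc]
  simp [cofreeLiftOfLength, -Nat.add_eq_zero_iff, h]

lemma sum_Comps_one {p q : ℕ} (h : p + q ≠ 0) (x y : ℕ → A) (f : List A → B) :
    ∑ c ∈ Comps 1 p q, f (List.ofFn (blockVal M c x y)) =
      f [M p q (fun i => x i) (fun i => y i)] := by
  have hComps : Comps 1 p q = {fun _ => (p, q)} := by
    ext c
    simp only [mem_Comps, univ_unique, Fin.default_eq_zero, sum_singleton, Fin.forall_fin_one,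
      mem_singleton, funext_iff, Prod.ext_iff]
    omega
  simp [hComps, blockVal, off1, off2]

variable [AddCommGroup A]

lemma omegaIter_eq_omegaWord (succ : A →+ A →+ A) (x : ℕ → A) (n : ℕ) :
    omegaIter (fun a b => succ a b) x n = omegaWord succ (initialList (n + 1) x) := by
  induction n with
  | zero => simp [omegaIter, omegaWord, initialList]
  | succ n ih =>
    have hlast : initialList (n + 2) x = initialList (n + 1) x ++ [x (n + 1)] :=
      List.ofFn_succ_last
    rw [omegaIter, ih, hlast, omegaWord_append_singleton succ (by simp [initialList])]

theorem isDipterousBrace_listOp {star succ : A →+ A →+ A}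
    (hM10 : ∀ x y, M 1 0 x y = x 0)
    (hM01 : ∀ x y, M 0 1 x y = y 0)
    (hMp0 : ∀ p, 2 ≤ p → ∀ x y, M p 0 x y = 0)
    (hM0q : ∀ q, 2 ≤ q → ∀ x y, M 0 q x y = 0)
    (hMrec : ∀ p q : ℕ, 1 ≤ p → 1 ≤ q → ∀ x y : ℕ → A,
      M p q (fun i : Fin p => x i.1) (fun i : Fin q => y i.1)
        = star (omegaIter (fun a b => succ a b) x (p - 1))
            (omegaIter (fun a b => succ a b) y (q - 1))
          - ∑ k ∈ Finset.Icc 2 (p + q), ∑ c ∈ Comps k p q,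
              omegaIter (fun a b => succ a b)
                (fun t => if h : t < k then blockVal M c x y ⟨t, h⟩ else 0) (k - 1)) :
    IsDipterousBrace star succ (listOp M) where
  right_unit {x} hx := by
    match x, hx with
    | [a], _ => exact hM10 _ _
    | _ :: _ :: _, _ => exact hMp0 _ (by simp) _ _
  left_unit {y} hy := by
    match y, hy with
    | [a], _ => exact hM01 _ _
    | _ :: _ :: _, _ => exact hM0q _ (by simp) _ _
  star_omegaWord {u v} hu hv := by
    have hp := List.length_pos_iff.2 hu
    have hq := List.length_pos_iff.2 hv
    rw [← initialList_getD u 0, ← initialList_getD v 0]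
    generalize u.length = p, (fun n => u.getD n 0) = x at *
    generalize v.length = q, (fun n => v.getD n 0) = y at *
    have homega {n : ℕ} (hn : 1 ≤ n) (w : ℕ → A) :
        omegaWord succ (initialList n w) = omegaIter (fun a b => succ a b) w (n - 1) := by
      rw [omegaIter_eq_omegaWord, Nat.sub_add_cancel hn]
    rw [sum_cofreeLift_listOp M (by omega), ← add_sum_Ioc_eq_sum_Icc (by omega),
      ← Icc_add_one_left_eq_Ioc, sum_Comps_one M (by omega), homega hp, homega hq,
      ← eq_sub_iff_add_eq]
    refine (hMrec p q hp hq x y).trans (congrArg _ (sum_congr rfl fun k hk => ?_))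
    refine sum_congr rfl fun c _ => ?_
    rw [← homega (Nat.le_of_succ_le (mem_Icc.1 hk).1)]
    simp [initialList]

end Compositions

end Multibrace

theorem dipterous_to_multibrace_general {A : Type*} [AddCommGroup A] (star succ : A →+ A →+ A)
    (hstar : ∀ x y z : A, star (star x y) z = star x (star y z))
    (M : ∀ p q : ℕ, (Fin p → A) → (Fin q → A) → A)
    (hM10 : ∀ x y, M 1 0 x y = x 0)
    (hM01 : ∀ x y, M 0 1 x y = y 0)
    (hMp0 : ∀ p, 2 ≤ p → ∀ x y, M p 0 x y = 0)
    (hM0q : ∀ q, 2 ≤ q → ∀ x y, M 0 q x y = 0)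
    (hMrec : ∀ p q : ℕ, 1 ≤ p → 1 ≤ q → ∀ x y : ℕ → A,
      M p q (fun i : Fin p => x i.1) (fun i : Fin q => y i.1)
        = star (omegaIter (fun a b => succ a b) x (p - 1))
            (omegaIter (fun a b => succ a b) y (q - 1))
          - ∑ k ∈ Finset.Icc 2 (p + q), ∑ c ∈ Comps k p q,
              omegaIter (fun a b => succ a b)
                (fun t => if h : t < k then blockVal M c x y ⟨t, h⟩ else 0) (k - 1))
    {i j k : ℕ} (hij : i + j ≠ 0) (hjk : j + k ≠ 0) (x y z : ℕ → A) : Rrel M i j k x y z := by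
  have hM := Multibrace.isDipterousBrace_listOp M hM10 hM01 hMp0 hM0q hMrec
  have h := hM.sum_brace_assoc hstar (x := Multibrace.initialList i x)
    (y := Multibrace.initialList j y) (z := Multibrace.initialList k z)
    (by simpa using hij) (by simpa using hjk)
  rw [Multibrace.sum_cofreeLift_listOp M hij, Multibrace.sum_cofreeLift_listOp M hjk] at h
  simpa only [Rrel, Multibrace.initialList, Multibrace.listOp_ofFn] using h

/-- The multibrace operations `M_{pq}` defined recursively from a
dipterous structure `(A, *, ≻)` by
`M_{pq}(x;y) = ω^≻(x) * ω^≻(y) − Σ_{k≥2} Σ ω^≻(M_{i₁j₁}(x¹;y¹), …, M_{i_kj_k}(x^k;y^k))`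
satisfy all the multibrace relations `(R_{ijk})`: every dipterous algebra is naturally a
multibrace algebra. -/
theorem dipterous_to_multibrace (K A : Type*) [Field K] [AddCommGroup A] [Module K A]
    (star succ : A →ₗ[K] A →ₗ[K] A)
    (hstar : ∀ x y z : A, star (star x y) z = star x (star y z))
    (hdipt : ∀ x y z : A, succ (star x y) z = succ x (succ y z))
    (M : ∀ p q : ℕ, (Fin p → A) → (Fin q → A) → A)
    (hM00 : ∀ x y, M 0 0 x y = 0)
    (hM10 : ∀ x y, M 1 0 x y = x 0)
    (hM01 : ∀ x y, M 0 1 x y = y 0)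
    (hMp0 : ∀ p, 2 ≤ p → ∀ x y, M p 0 x y = 0)
    (hM0q : ∀ q, 2 ≤ q → ∀ x y, M 0 q x y = 0)
    (hMrec : ∀ p q : ℕ, 1 ≤ p → 1 ≤ q → ∀ x y : ℕ → A,
      M p q (fun i : Fin p => x i.1) (fun i : Fin q => y i.1)
        = star (omegaIter (fun a b => succ a b) x (p - 1))
            (omegaIter (fun a b => succ a b) y (q - 1))
          - ∑ k ∈ Finset.Icc 2 (p + q), ∑ c ∈ Comps k p q,
              omegaIter (fun a b => succ a b)
                (fun t => if h : t < k then blockVal M c x y ⟨t, h⟩ else 0) (k - 1)) :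
    ∀ i j k : ℕ, 1 ≤ i → 1 ≤ j → 1 ≤ k → ∀ x y z : ℕ → A, Rrel M i j k x y z := by
  intro i j k _ hj _ x y z
  exact dipterous_to_multibrace_general (LinearMap.toAddMonoidHom'.comp star.toAddMonoidHom)
    (LinearMap.toAddMonoidHom'.comp succ.toAddMonoidHom) hstar M hM10 hM01 hMp0 hM0q hMrec
    (by omega) (by omega) x y z
end

section
/- Let A be a 2-associative algebra over a commutative ring K, i.e., a K-module with two associative K-bilinear products · and *. Define M₁₁(x;y) := x*y − x·y − y·x, M₂₁(x,y;z) := (x·y)*z − x·(y*z) − (x*z)·y + x·z·y, and M₁₂(x;y,z) := x*(y·z) − (x*y)·z − y·(x*z) + y·x·z. Then for all x,y,z ∈ A: M₂₁(x,y;z) + M₂₁(y,x;z) + M₁₁(M₁₁(x;y);z) = M₁₁(x;M₁₁(y;z)) + M₁₂(x;y,z) + M₁₂(x;z,y). -/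
/-!
Solving the definitions of `M₁₁` and `M₂₁` for their leading terms expands `(x * y) * z` as the
left-hand side of (R₁₁₁) plus a decomposable part built from outer `·`-products. Replacing `*` by
its opposite turns this into the expansion of `x * (y * z)`, with the right-hand side of (R₁₁₁) and
the *same* decomposable part. Hence (R₁₁₁) at `(x, y, z)` says exactly that `*` associates there.
-/

namespace TwoAs

variable {A : Type*} [AddCommGroup A] (dot star : A →+ A →+ A)

/-- The multibrace operation `M₁₁(x; y)`, the failure of `*` to be the symmetrized product `·`. -/
def brace₁₁ (x y : A) : A :=
  star x y - dot x y - dot y x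

/-- The multibrace operation `M₂₁(x, y; z)`, correcting the expansion of `(x · y) * z`.
The triple `·`-product is bracketed to the left. -/
def brace₂₁ (x y z : A) : A :=
  star (dot x y) z - dot x (star y z) - dot (star x z) y + dot (dot x z) y

/-- The multibrace operation `M₁₂(x; y, z)`, correcting the expansion of `x * (y · z)`.
The triple `·`-product is bracketed to the left. -/
def brace₁₂ (x y z : A) : A :=
  star x (dot y z) - dot (star x y) z - dot y (star x z) + dot (dot y x) z

/-- The part of a triple `*`-product of `x`, `y`, `z` made of outer `·`-products: one term for each
ordered splitting of the three factors into two blocks, minus the six triple `·`-products, which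
these terms count twice. A block of two factors is multiplied by `*` in argument order. -/
def decomposablePart (x y z : A) : A :=
  (dot (star x y) z + dot z (star x y))
    + (dot (star x z) y + dot y (star x z))
    + (dot (star y z) x + dot x (star y z))
    - (dot (dot x y) z + dot (dot x z) y + dot (dot y x) z
      + dot (dot y z) x + dot (dot z x) y + dot (dot z y) x)

theorem star_eq_brace₁₁_add (x y : A) :
    star x y = brace₁₁ dot star x y + dot x y + dot y x := by
  unfold brace₁₁
  abel

theorem star_dot_eq_brace₂₁_add (x y z : A) :
    star (dot x y) z =
      brace₂₁ dot star x y z + dot x (star y z) + dot (star x z) y - dot (dot x z) y := by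
  unfold brace₂₁
  abel

theorem brace₁₁_flip (x y : A) : brace₁₁ dot star.flip x y = brace₁₁ dot star y x := by
  simp only [brace₁₁, AddMonoidHom.flip_apply]
  abel

theorem brace₂₁_flip (x y z : A) : brace₂₁ dot star.flip x y z = brace₁₂ dot star z x y := by
  simp only [brace₂₁, brace₁₂, AddMonoidHom.flip_apply]
  abel

theorem decomposablePart_flip (x y z : A) :
    decomposablePart dot star.flip x y z = decomposablePart dot star z y x := by
  simp only [decomposablePart, AddMonoidHom.flip_apply]
  abel

variable {dot}

theorem star_star_left_eq_add_decomposablePart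
    (hdot : ∀ a b c : A, dot (dot a b) c = dot a (dot b c)) (x y z : A) :
    star (star x y) z =
      brace₂₁ dot star x y z + brace₂₁ dot star y x z + brace₁₁ dot star (brace₁₁ dot star x y) z
        + decomposablePart dot star x y z := by
  have dot_brace : dot z (brace₁₁ dot star x y) =
      dot z (star x y) - dot (dot z x) y - dot (dot z y) x := by
    simp only [brace₁₁, map_sub, hdot]
  have brace_dot : dot (brace₁₁ dot star x y) z =
      dot (star x y) z - dot (dot x y) z - dot (dot y x) z := by
    simp only [brace₁₁, map_sub, AddMonoidHom.sub_apply]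
  calc
    star (star x y) z = star (brace₁₁ dot star x y) z + star (dot x y) z + star (dot y x) z := by
      rw [star_eq_brace₁₁_add dot star x y]
      simp only [map_add, AddMonoidHom.add_apply]
    _ = (brace₁₁ dot star (brace₁₁ dot star x y) z
          + dot (brace₁₁ dot star x y) z + dot z (brace₁₁ dot star x y))
        + (brace₂₁ dot star x y z + dot x (star y z) + dot (star x z) y - dot (dot x z) y)
        + (brace₂₁ dot star y x z + dot y (star x z) + dot (star y z) x - dot (dot y z) x) := by
      rw [star_eq_brace₁₁_add dot star (brace₁₁ dot star x y) z,
        star_dot_eq_brace₂₁_add dot star x y z, star_dot_eq_brace₂₁_add dot star y x z]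
    _ = _ := by
      rw [dot_brace, brace_dot, decomposablePart]
      abel

theorem star_star_right_eq_add_decomposablePart
    (hdot : ∀ a b c : A, dot (dot a b) c = dot a (dot b c)) (x y z : A) :
    star x (star y z) =
      brace₁₁ dot star x (brace₁₁ dot star y z) + brace₁₂ dot star x y z + brace₁₂ dot star x z y
        + decomposablePart dot star x y z := by
  have expansion := star_star_left_eq_add_decomposablePart star.flip hdot z y x
  simp only [brace₁₁_flip, brace₂₁_flip, decomposablePart_flip, AddMonoidHom.flip_apply]
    at expansion
  rw [expansion]
  abel

end TwoAs

open TwoAs in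
theorem twoAs_R111_general {A : Type*} [AddCommGroup A] (dot star : A →+ A →+ A)
    (hdot : ∀ x y z : A, dot (dot x y) z = dot x (dot y z)) (x y z : A) :
    brace₂₁ dot star x y z + brace₂₁ dot star y x z + brace₁₁ dot star (brace₁₁ dot star x y) z
        = brace₁₁ dot star x (brace₁₁ dot star y z)
          + brace₁₂ dot star x y z + brace₁₂ dot star x z y
      ↔ star (star x y) z = star x (star y z) := by
  rw [star_star_left_eq_add_decomposablePart star hdot,
    star_star_right_eq_add_decomposablePart star hdot, add_left_inj]

/-- In any 2-associative algebra (two associative bilinear products `·` and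
`*`) the induced multibrace operations `M₁₁`, `M₂₁`, `M₁₂` satisfy the first nontrivial
multibrace relation (R₁₁₁). -/
theorem twoAs_R111 (K A : Type*) [CommRing K] [AddCommGroup A] [Module K A]
    (dot star : A →ₗ[K] A →ₗ[K] A)
    (hdot : ∀ x y z : A, dot (dot x y) z = dot x (dot y z))
    (hstar : ∀ x y z : A, star (star x y) z = star x (star y z)) :
    ∀ x y z : A,
      let M11 : A → A → A := fun a b => star a b - dot a b - dot b a
      let M21 : A → A → A → A := fun a b c =>
        star (dot a b) c - dot a (star b c) - dot (star a c) b + dot (dot a c) b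
      let M12 : A → A → A → A := fun a b c =>
        star a (dot b c) - dot (star a b) c - dot b (star a c) + dot (dot b a) c
      M21 x y z + M21 y x z + M11 (M11 x y) z
        = M11 x (M11 y z) + M12 x y z + M12 x z y := fun x y z =>
  (twoAs_R111_general (LinearMap.toAddMonoidHom'.comp dot.toAddMonoidHom)
    (LinearMap.toAddMonoidHom'.comp star.toAddMonoidHom) hdot x y z).mpr (hstar x y z)
end

section
/- Let K be a field of characteristic zero and let F = ⊕_{n≥1} K·x_n be the free K-module on a basis (x_n)_{n≥1}, equipped with the K-bilinear operation {x_p, x_q} := −p·x_{p+q}. Then F is generated as a pre-Lie algebra by the single element x₁: the smallest K-submodule S ⊆ F with x₁ ∈ S and {S,S} ⊆ S is F itself. -/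
/-!
Right bracketing by `x₁` is a weighted shift: it sends `x_n` to `-n • x_{n+1}`. Since `-n` is
invertible, every `x_n` is reached from `x₁`, even without bracketing by any other element.
-/

theorem span_range_le_of_mapsTo_weightedShift {R M : Type*} [Semiring R] [AddCommMonoid M]
    [Module R M] {x : ℕ+ → M} {c : ℕ+ → R} (hc : ∀ n, IsUnit (c n)) {T : M → M}
    (hT : ∀ n, T (x n) = c n • x (n + 1)) {S : Submodule R M} (hx : x 1 ∈ S)
    (hS : Set.MapsTo T S S) : Submodule.span R (Set.range x) ≤ S := by
  rw [Submodule.span_le]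
  rintro _ ⟨n, rfl⟩
  induction n using PNat.recOn with
  | one => exact hx
  | succ n hn =>
    have hshift : c n • x (n + 1) ∈ S := hT n ▸ hS hn
    exact (S.smul_mem_iff_of_isUnit (hc n)).mp hshift

theorem isUnit_natCast_of_algebra (k : Type*) {A : Type*} [Semifield k] [CharZero k] [Semiring A]
    [Algebra k A] {n : ℕ} (hn : n ≠ 0) : IsUnit (n : A) := by
  have hunit : IsUnit (n : k) := (Nat.cast_ne_zero.mpr hn).isUnit
  simpa only [map_natCast] using hunit.map (algebraMap k A)

theorem faaDiBruno_generated_by_x1_general (K : Type*) [CommRing K] [Algebra ℚ K]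
    (br : (ℕ+ →₀ K) →ₗ[K] (ℕ+ →₀ K) →ₗ[K] (ℕ+ →₀ K))
    (hbr : ∀ p q : ℕ+,
      br (Finsupp.single p 1) (Finsupp.single q 1)
        = Finsupp.single (p + q) (-((p : ℕ) : K)))
    (S : Submodule K (ℕ+ →₀ K)) (h1 : Finsupp.single 1 1 ∈ S)
    (hS : ∀ a ∈ S, br a (Finsupp.single 1 1) ∈ S) : S = ⊤ := by
  have hunit (n : ℕ+) : IsUnit (-((n : ℕ) : K)) := (isUnit_natCast_of_algebra ℚ n.ne_zero).neg
  have hshift (n : ℕ+) : br (Finsupp.single n 1) (Finsupp.single 1 1)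
      = (-((n : ℕ) : K)) • Finsupp.single (n + 1) 1 := by
    rw [hbr, Finsupp.smul_single_one]
  rw [eq_top_iff, ← Finsupp.basisSingleOne.span_eq, Finsupp.coe_basisSingleOne]
  exact span_range_le_of_mapsTo_weightedShift hunit hshift h1 hS

/-- Over a field of characteristic zero, the Faà di Bruno pre-Lie algebra
`F = ⊕_{n≥1} K·x_n` with `{x_p, x_q} := -p·x_{p+q}` is generated as a pre-Lie algebra by
`x₁`: any submodule containing `x₁` and closed under the bracket is everything. -/
theorem faaDiBruno_generated_by_x1 (K : Type*) [Field K] [CharZero K]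
    (br : (ℕ+ →₀ K) →ₗ[K] (ℕ+ →₀ K) →ₗ[K] (ℕ+ →₀ K))
    (hbr : ∀ p q : ℕ+,
      br (Finsupp.single p 1) (Finsupp.single q 1)
        = Finsupp.single (p + q) (-((p : ℕ) : K))) :
    ∀ S : Submodule K (ℕ+ →₀ K),
      Finsupp.single 1 1 ∈ S →
      (∀ a b : ℕ+ →₀ K, a ∈ S → b ∈ S → br a b ∈ S) →
      S = ⊤ := by
  intro S h1 hS
  exact faaDiBruno_generated_by_x1_general K br hbr S h1 fun a ha ↦ hS a _ ha h1
end
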